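/- Let 0<c₁<⋯<c_m be non-integer reals. There exist constants C>0 and κ>0 depending only on c₁,…,c_m, m such that for every N≥1 and all ξ₁,…,ξ_m∈ℝ, | (1/N) ∑_{n=1}^{N} 1_{n>N/2} e(ξ₁⌊n^{c₁}⌋+⋯+ξ_m⌊n^{c_m}⌋) | ≤ C ( N^{−κ} + min_{1≤i≤m} (‖ξ_i‖_𝕋 N^{c_i})^{−κ} ). -/

import Mathlib

open MeasureTheory Filter Finset
open scoped ENNReal NNReal

noncomputable section

/-- `e(x) = e^{2πix}`. -/
def eC (x : ℝ) : ℂ := Complex.exp (2 * Real.pi * Complex.I * x)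

/-- The symbol of the upper-half discrete averaging operator:
`m_{N;ℤ}(ξ) = (1/N) ∑_{n=1}^{N} 1_{n>N/2} e(ξ₁⌊n^{c₁}⌋ + ⋯ + ξ_m⌊n^{c_m}⌋)`. -/
def mZ (m : ℕ) (c : Fin m → ℝ) (N : ℕ) (ξ : Fin m → ℝ) : ℂ :=
  (N : ℂ)⁻¹ * ∑ n ∈ Finset.Icc 1 N,
    if N < 2 * n then eC (∑ i, ξ i * (⌊(n : ℝ) ^ c i⌋ : ℝ)) else 0

/-- `‖ξ‖_𝕋`, the distance from `ξ` to the nearest integer. -/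
def distT (ξ : ℝ) : ℝ := |ξ - round ξ|

/-!
The integer parts are removed by Fourier analysis. Modulo `1` one may assume `|ξᵢ| ≤ 1/2`, and
`e(ξ⌊y⌋) = e(ξy) e(-ξ{y})`. The periodic function `y ↦ e(-ξ{y})` is replaced by its Fejér
interpolation at `K = M³` equispaced nodes, a trigonometric polynomial, with `M` a small power of
`N`. The approximation fails only for `y` near an integer, and the number of `n` with `n^{cᵢ}` near
an integer is estimated with a Fejér kernel of order `M`. Expanding the product over `i` leaves
smooth sums `∑ e(∑ θᵢ n^{cᵢ})` with `θᵢ - ξᵢ` an integer of size below `K`. If all these integers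
vanish, the smooth sum is bounded in terms of `|ξᵢ| N^{cᵢ}`, which gives the second term of the
claim; otherwise some `|θᵢ| ≥ 1/2` and each smooth sum saves a power of `N`, which beats the number
`K^{2m}` of tuples.

For a smooth sum put `T = maxᵢ |θᵢ| N^{cᵢ}`. Since the `cᵢ` are distinct non-integers, the matrix of
the falling factorials of the `cᵢ` is of Vandermonde type and invertible, so that at each point of
`[N/2, 2N]` some derivative of bounded order of the phase has its maximal size `T N^{-k}`. If
`T ≤ N^{3/4}`, the increments of the phase are small and a discrete van der Corput lemma saves a
power of `T`. If `T` is larger, a bounded number of Weyl–van der Corput differencing steps first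
brings the size of the phase down to between `N^{1/4}` and `N^{1/2}`, where the same lemma applies.
-/

open scoped fwdDiff

/-! ### The additive character -/

lemma eC_eq_fourierChar (x : ℝ) : eC x = Real.fourierChar x := by
  rw [Real.fourierChar_apply, eC]
  congr 1
  push_cast
  ring

lemma eC_zero : eC 0 = 1 := by
  simp only [eC_eq_fourierChar, AddChar.map_zero_eq_one, Circle.coe_one]

lemma eC_add (x y : ℝ) : eC (x + y) = eC x * eC y := by
  simp only [eC_eq_fourierChar, AddChar.map_add_eq_mul, Circle.coe_mul]

lemma eC_neg (x : ℝ) : eC (-x) = (starRingEnd ℂ) (eC x) := by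
  simp only [eC_eq_fourierChar, AddChar.map_neg_eq_inv, Circle.coe_inv_eq_conj]

lemma eC_sub (x y : ℝ) : eC (x - y) = eC x * (starRingEnd ℂ) (eC y) := by
  rw [sub_eq_add_neg, eC_add, eC_neg]

lemma eC_sum {ι : Type*} (s : Finset ι) (f : ι → ℝ) :
    eC (∑ i ∈ s, f i) = ∏ i ∈ s, eC (f i) := by
  classical
  induction s using Finset.induction_on with
  | empty => simp only [sum_empty, prod_empty, eC_zero]
  | insert i s hi ih => rw [sum_insert hi, prod_insert hi, eC_add, ih]

lemma eC_nat_mul (n : ℕ) (x : ℝ) : eC (n * x) = eC x ^ n := by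
  simp only [eC_eq_fourierChar, ← nsmul_eq_mul, AddChar.map_nsmul_eq_pow, Circle.coe_pow]

lemma eC_intCast (n : ℤ) : eC n = 1 :=
  Complex.exp_eq_one_iff.2 ⟨n, by push_cast; ring⟩

lemma norm_eC (x : ℝ) : ‖eC x‖ = 1 := by
  rw [eC_eq_fourierChar, Circle.norm_coe]

lemma norm_sum_eC_le_card {α : Type*} (s : Finset α) (g : α → ℝ) :
    ‖∑ n ∈ s, eC (g n)‖ ≤ #s := by
  simpa only [norm_eC, sum_const, nsmul_eq_mul, mul_one] using
    norm_sum_le s fun n => eC (g n)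

lemma norm_eC_sub_one (x : ℝ) : ‖eC x - 1‖ = 2 * |Real.sin (Real.pi * x)| := by
  have h : eC x = Complex.exp (Complex.I * ((2 * Real.pi * x : ℝ) : ℂ)) := by
    rw [eC]
    congr 1
    push_cast
    ring
  rw [h, Complex.norm_exp_I_mul_ofReal_sub_one, Real.norm_eq_abs, abs_mul, abs_two]
  congr 3
  ring

lemma four_mul_abs_le_norm_eC_sub_one {x : ℝ} (hx : |x| ≤ 1 / 2) : 4 * |x| ≤ ‖eC x - 1‖ := by
  have hπ : |Real.pi * x| ≤ Real.pi / 2 := by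
    rw [abs_mul, abs_of_pos Real.pi_pos]
    nlinarith [Real.pi_pos]
  have h : 2 / Real.pi * |Real.pi * x| = 2 * |x| := by
    rw [abs_mul, abs_of_pos Real.pi_pos]
    field_simp
  have hsin := Real.mul_abs_le_abs_sin hπ
  rw [norm_eC_sub_one]
  linarith

lemma norm_eC_sub_le (x y : ℝ) : ‖eC x - eC y‖ ≤ 2 * Real.pi * |x - y| := by
  have h : eC x - eC y = eC y * (eC (x - y) - 1) := by
    rw [mul_sub, ← eC_add, add_sub_cancel, mul_one]
  calc ‖eC x - eC y‖ = 2 * |Real.sin (Real.pi * (x - y))| := by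
        rw [h, norm_mul, norm_eC, one_mul, norm_eC_sub_one]
    _ ≤ 2 * |Real.pi * (x - y)| := mul_le_mul_of_nonneg_left Real.abs_sin_le_abs zero_le_two
    _ = 2 * Real.pi * |x - y| := by rw [abs_mul, abs_of_pos Real.pi_pos, mul_assoc]

/-! ### The Kusmin–Landau inequality -/

lemma norm_sum_sub_mul_le {R : Type*} [NormedRing R] {z w : ℕ → R} (hz : ∀ n, ‖z n‖ ≤ 1) (k : ℕ) :
    ‖∑ n ∈ range (k + 1), (z (n + 1) - z n) * w n‖ ≤
      ‖w 0‖ + ‖w k‖ + ∑ n ∈ range k, ‖w (n + 1) - w n‖ := by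
  have abel : ∑ n ∈ range (k + 1), (z (n + 1) - z n) * w n =
      z (k + 1) * w k - z 0 * w 0 - ∑ n ∈ range k, z (n + 1) * (w (n + 1) - w n) := by
    induction k with
    | zero => simp only [zero_add, sum_range_one, range_zero, sum_empty, sub_zero, sub_mul]
    | succ k ih =>
      rw [sum_range_succ, ih, sum_range_succ _ k]
      noncomm_ring
  have mul_le (a b : R) (ha : ‖a‖ ≤ 1) : ‖a * b‖ ≤ ‖b‖ :=
    (norm_mul_le a b).trans (mul_le_of_le_one_left (norm_nonneg b) ha)
  calc _ ≤ ‖z (k + 1) * w k‖ + ‖z 0 * w 0‖ + ∑ n ∈ range k, ‖z (n + 1) * (w (n + 1) - w n)‖ := by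
        rw [abel]
        exact (norm_sub_le _ _).trans (add_le_add (norm_sub_le _ _) (norm_sum_le _ _))
    _ ≤ ‖w k‖ + ‖w 0‖ + ∑ n ∈ range k, ‖w (n + 1) - w n‖ := by
        gcongr <;> exact mul_le _ _ (hz _)
    _ = _ := by rw [add_comm ‖w k‖]

lemma norm_inv_eC_sub_one_le {δ x : ℝ} (hδ : 0 < δ) (hx : δ ≤ |x|) (hx' : |x| ≤ 1 / 2) :
    ‖(eC x - 1)⁻¹‖ ≤ 1 / (4 * δ) := by
  rw [norm_inv, ← one_div]
  exact one_div_le_one_div_of_le (by positivity)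
    (by linarith [four_mul_abs_le_norm_eC_sub_one hx'])

lemma norm_inv_eC_sub_one_sub_le {δ x y : ℝ} (hδ : 0 < δ) (hx : δ ≤ |x|) (hx' : |x| ≤ 1 / 2)
    (hy : δ ≤ |y|) (hy' : |y| ≤ 1 / 2) :
    ‖(eC x - 1)⁻¹ - (eC y - 1)⁻¹‖ ≤ |x - y| / δ ^ 2 := by
  have ne_zero {u : ℝ} (hu : δ ≤ |u|) (hu' : |u| ≤ 1 / 2) : eC u - 1 ≠ 0 := by
    rw [← norm_pos_iff]
    linarith [four_mul_abs_le_norm_eC_sub_one hu']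
  have h : (eC x - 1)⁻¹ - (eC y - 1)⁻¹ = (eC y - eC x) * ((eC x - 1)⁻¹ * (eC y - 1)⁻¹) := by
    field_simp [ne_zero hx hx', ne_zero hy hy']
    ring
  calc ‖(eC x - 1)⁻¹ - (eC y - 1)⁻¹‖
      = ‖eC y - eC x‖ * (‖(eC x - 1)⁻¹‖ * ‖(eC y - 1)⁻¹‖) := by rw [h, norm_mul, norm_mul]
    _ ≤ 2 * Real.pi * |y - x| * (1 / (4 * δ) * (1 / (4 * δ))) := by
        gcongr
        · exact norm_eC_sub_le y x
        · exact norm_inv_eC_sub_one_le hδ hx hx'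
        · exact norm_inv_eC_sub_one_le hδ hy hy'
    _ = Real.pi / 8 * (|x - y| / δ ^ 2) := by
        rw [abs_sub_comm]
        field_simp
        ring
    _ ≤ |x - y| / δ ^ 2 :=
        mul_le_of_le_one_left (by positivity) (by linarith [Real.pi_lt_four])

lemma norm_sum_range_eC_le_of_fwdDiff {f : ℕ → ℝ} {k : ℕ} {δ V : ℝ} (hδ : 0 < δ) (hV : 0 ≤ V)
    (hlow : ∀ n < k, δ ≤ |Δ_[1] f n|) (hup : ∀ n < k, |Δ_[1] f n| ≤ 1 / 2)
    (hvar : ∀ n < k, |Δ_[1] ^[2] f n| ≤ V) :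
    ‖∑ n ∈ range k, eC (f n)‖ ≤ 1 / δ + k * (V / δ ^ 2) := by
  rcases k with _ | k
  · simp only [range_zero, sum_empty, norm_zero]
    positivity
  set w : ℕ → ℂ := fun n => (eC (Δ_[1] f n) - 1)⁻¹
  have hw (n : ℕ) (hn : n < k + 1) : ‖w n‖ ≤ 1 / (4 * δ) :=
    norm_inv_eC_sub_one_le hδ (hlow n hn) (hup n hn)
  have hdw (n : ℕ) (hn : n < k) : ‖w (n + 1) - w n‖ ≤ V / δ ^ 2 := by
    refine (norm_inv_eC_sub_one_sub_le hδ (hlow _ (by lia)) (hup _ (by lia))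
      (hlow n (by lia)) (hup n (by lia))).trans ?_
    gcongr
    exact hvar n (by lia)
  have telescope (n : ℕ) (hn : n < k + 1) : eC (f n) = (eC (f (n + 1)) - eC (f n)) * w n := by
    have hne : eC (Δ_[1] f n) - 1 ≠ 0 := by
      rw [← norm_pos_iff]
      linarith [four_mul_abs_le_norm_eC_sub_one (hup n hn), hlow n hn]
    have hsub : eC (f (n + 1)) - eC (f n) = eC (f n) * (eC (Δ_[1] f n) - 1) := by
      rw [mul_sub, ← eC_add, fwdDiff, add_sub_cancel, mul_one]
    rw [hsub, mul_assoc, mul_inv_cancel₀ hne, mul_one]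
  calc ‖∑ n ∈ range (k + 1), eC (f n)‖
      = ‖∑ n ∈ range (k + 1), (eC (f (n + 1)) - eC (f n)) * w n‖ := by
        rw [sum_congr rfl fun n hn => telescope n (mem_range.1 hn)]
    _ ≤ ‖w 0‖ + ‖w k‖ + ∑ n ∈ range k, ‖w (n + 1) - w n‖ :=
        norm_sum_sub_mul_le (fun n => (norm_eC _).le) k
    _ ≤ 1 / (4 * δ) + 1 / (4 * δ) + ∑ n ∈ range k, V / δ ^ 2 := by
        gcongr with n hn
        exacts [hw 0 (by lia), hw k (by lia), hdw n (mem_range.1 hn)]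
    _ = 1 / δ / 2 + k * (V / δ ^ 2) := by
        rw [sum_const, card_range, nsmul_eq_mul]
        field_simp
        ring
    _ ≤ 1 / δ + (k + 1 : ℕ) * (V / δ ^ 2) := by
        refine add_le_add (half_le_self (one_div_pos.2 hδ).le) ?_
        gcongr
        exact k.le_succ

lemma norm_sum_Ico_eC_le_of_fwdDiff {f : ℕ → ℝ} {a b : ℕ} {δ V : ℝ} (hδ : 0 < δ) (hV : 0 ≤ V)
    (hlow : ∀ n ∈ Ico a b, δ ≤ |Δ_[1] f n|) (hup : ∀ n ∈ Ico a b, |Δ_[1] f n| ≤ 1 / 2)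
    (hvar : ∀ n ∈ Ico a b, |Δ_[1] ^[2] f n| ≤ V) :
    ‖∑ n ∈ Ico a b, eC (f n)‖ ≤ 1 / δ + (b - a : ℕ) * (V / δ ^ 2) := by
  have mem (n : ℕ) (hn : n < b - a) : a + n ∈ Ico a b := mem_Ico.2 ⟨by lia, by lia⟩
  rw [sum_Ico_eq_sum_range]
  exact norm_sum_range_eC_le_of_fwdDiff hδ hV (fun n hn => hlow _ (mem n hn))
    (fun n hn => hup _ (mem n hn)) (fun n hn => hvar _ (mem n hn))

/-! ### A discrete van der Corput lemma -/

lemma norm_sum_eC_neg {α : Type*} (s : Finset α) (f : α → ℝ) :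
    ‖∑ n ∈ s, eC (-f n)‖ = ‖∑ n ∈ s, eC (f n)‖ := by
  simp only [eC_neg, ← map_sum, RCLike.norm_conj]

lemma fwdDiff_neg {M G : Type*} [AddCommMonoid M] [AddCommGroup G] (h : M) (f : M → G) :
    Δ_[h] (-f) = -Δ_[h] f := by
  ext x
  simp only [fwdDiff, Pi.neg_apply, neg_sub_neg, neg_sub]

lemma fwdDiff_iter_neg {M G : Type*} [AddCommMonoid M] [AddCommGroup G] (h : M) (f : M → G)
    (j : ℕ) : Δ_[h] ^[j] (-f) = -Δ_[h] ^[j] f := by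
  simpa only [neg_smul, one_smul] using fwdDiff_iter_const_smul h (-1 : ℤ) f j

lemma exists_threshold {P : ℕ → Prop} {a b : ℕ} (hab : a ≤ b) (hP : MonotoneOn P (Set.Ico a b)) :
    ∃ p, a ≤ p ∧ p ≤ b ∧ (∀ n ∈ Ico a p, ¬P n) ∧ ∀ n ∈ Ico p b, P n := by
  classical
  have hex : ∃ p, a ≤ p ∧ (p = b ∨ P p) := ⟨b, hab, Or.inl rfl⟩
  have hle : Nat.find hex ≤ b := Nat.find_min' hex ⟨hab, Or.inl rfl⟩
  obtain ⟨ha, hb⟩ := Nat.find_spec hex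
  refine ⟨Nat.find hex, ha, hle, fun n hn hPn => ?_, fun n hn => ?_⟩
  · exact Nat.find_min hex (mem_Ico.1 hn).2 ⟨(mem_Ico.1 hn).1, Or.inr hPn⟩
  · have hn := mem_Ico.1 hn
    exact hP ⟨ha, by lia⟩ ⟨by lia, hn.2⟩ hn.1 (hb.resolve_left (by lia))

lemma mul_sub_le_sub_of_le_fwdDiff {E : ℕ → ℝ} {a b : ℕ} {γ : ℝ}
    (hE : ∀ n ∈ Ico a b, γ ≤ Δ_[1] E n) {n n' : ℕ} (han : a ≤ n) (hnn' : n ≤ n') (hn'b : n' ≤ b) :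
    γ * (n' - n) ≤ E n' - E n := by
  induction n', hnn' using Nat.le_induction with
  | base => simp only [sub_self, mul_zero, le_refl]
  | succ k hk ih =>
    have hstep := hE k (mem_Ico.2 ⟨by lia, by lia⟩)
    have hsum := ih (by lia)
    rw [fwdDiff] at hstep
    push_cast
    linarith

lemma exists_Ico_partition_of_le_fwdDiff {E : ℕ → ℝ} {a b : ℕ} {γ μ : ℝ} (hab : a ≤ b)
    (hγ : 0 < γ) (hμ : 0 ≤ μ) (hE : ∀ n ∈ Ico a b, γ ≤ Δ_[1] E n) :
    ∃ p q, a ≤ p ∧ p ≤ q ∧ q ≤ b ∧ (∀ n ∈ Ico a p, E n ≤ -μ) ∧ (∀ n ∈ Ico q b, μ ≤ E n) ∧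
      (q - p : ℕ) ≤ 2 * μ / γ + 1 := by
  have hmono : MonotoneOn E (Set.Ico a b) := fun n hn n' hn' h => by
    have hgrowth := mul_sub_le_sub_of_le_fwdDiff hE hn.1 h hn'.2.le
    have hcast : (n : ℝ) ≤ n' := by exact_mod_cast h
    nlinarith
  obtain ⟨p, hap, hpb, hleft, hright⟩ := exists_threshold (P := fun n => -μ < E n) hab
    fun n hn n' hn' h hlt => hlt.trans_le (hmono hn hn' h)
  obtain ⟨q, hpq, hqb, hmid, hlast⟩ := exists_threshold (P := fun n => μ ≤ E n) hpb
    fun n hn n' hn' h hle => hle.trans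
      (hmono (Set.Ico_subset_Ico_left hap hn) (Set.Ico_subset_Ico_left hap hn') h)
  refine ⟨p, q, hap, hpq, hqb, fun n hn => not_lt.1 (hleft n hn), hlast, ?_⟩
  obtain rfl | ⟨k, rfl⟩ : q = p ∨ ∃ k, q = p + k + 1 := by
    rcases hpq.eq_or_lt with h | h
    exacts [Or.inl h.symm, Or.inr ⟨q - p - 1, by lia⟩]
  · rw [Nat.sub_self, Nat.cast_zero]
    positivity
  · have hp := hright p (mem_Ico.2 ⟨le_rfl, by lia⟩)
    have hq := not_le.1 (hmid (p + k) (mem_Ico.2 ⟨by lia, by lia⟩))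
    have hgrowth := mul_sub_le_sub_of_le_fwdDiff hE hap (Nat.le_add_right p k) (by lia)
    have hk : (k : ℝ) ≤ 2 * μ / γ := by
      rw [le_div_iff₀ hγ]
      push_cast at hgrowth
      linarith
    rw [show p + k + 1 - p = k + 1 by lia]
    push_cast
    linarith

lemma norm_sum_eC_le_of_le_fwdDiff_of_sublevel {f E : ℕ → ℝ} {a b : ℕ} {γ μ S : ℝ} (hγ : 0 < γ)
    (hμ : 0 ≤ μ) (hE : ∀ n ∈ Ico a b, γ ≤ Δ_[1] E n)
    (hleft : ∀ p ≤ b, (∀ n ∈ Ico a p, E n ≤ -μ) → ‖∑ n ∈ Ico a p, eC (f n)‖ ≤ S)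
    (hright : ∀ q ≥ a, (∀ n ∈ Ico q b, μ ≤ E n) → ‖∑ n ∈ Ico q b, eC (f n)‖ ≤ S) :
    ‖∑ n ∈ Ico a b, eC (f n)‖ ≤ 2 * S + (2 * μ / γ + 1) := by
  rcases lt_or_ge b a with hba | hab
  · have hIco : Ico a b = ∅ := Ico_eq_empty_of_le hba.le
    have hS := hleft b le_rfl (by simp only [hIco, notMem_empty, false_imp_iff, implies_true])
    rw [hIco, sum_empty, norm_zero] at hS ⊢
    positivity
  obtain ⟨p, q, hap, hpq, hqb, hp, hq, hlen⟩ := exists_Ico_partition_of_le_fwdDiff hab hγ hμ hE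
  have hmid : ‖∑ n ∈ Ico p q, eC (f n)‖ ≤ 2 * μ / γ + 1 :=
    (norm_sum_eC_le_card _ _).trans (by rwa [Nat.card_Ico])
  rw [← sum_Ico_consecutive _ (hap.trans hpq) hqb, ← sum_Ico_consecutive _ hap hpq]
  refine norm_add₃_le.trans ?_
  linarith [hleft p (hpq.trans hqb) hp, hright q (hap.trans hpq) hq]

section Oscillation

variable {N : ℕ} {B T : ℝ}

lemma norm_sum_eC_le_of_le_abs_fwdDiff (hB : 1 ≤ B) (hT : 1 ≤ T) (hTN : 2 * B * T ≤ N)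
    {f : ℕ → ℝ} {a b : ℕ} {l : ℝ} (hab : b ≤ a + N) (hl : 0 < l) (hl1 : l ≤ 1)
    (hsmall : ∀ n ∈ Ico a b, |Δ_[1] f n| ≤ B * (T / N) ∧ |Δ_[1] ^[2] f n| ≤ B * (T / N ^ 2))
    (hlow : ∀ n ∈ Ico a b, l * (T / N) ≤ |Δ_[1] f n|) :
    ‖∑ n ∈ Ico a b, eC (f n)‖ ≤ (1 + B) * (N * T⁻¹ / l ^ 2) := by
  have hN : (0 : ℝ) < N := by nlinarith
  have hhalf : B * (T / N) ≤ 1 / 2 := by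
    rw [← mul_div_assoc, div_le_iff₀ hN]
    linarith
  have hlen : ((b - a : ℕ) : ℝ) ≤ N := by exact_mod_cast (by lia : b - a ≤ N)
  calc ‖∑ n ∈ Ico a b, eC (f n)‖
      ≤ 1 / (l * (T / N)) + (b - a : ℕ) * (B * (T / N ^ 2) / (l * (T / N)) ^ 2) :=
        norm_sum_Ico_eC_le_of_fwdDiff (by positivity) (by positivity) hlow
          (fun n hn => (hsmall n hn).1.trans hhalf) fun n hn => (hsmall n hn).2
    _ ≤ 1 / (l * (T / N)) + N * (B * (T / N ^ 2) / (l * (T / N)) ^ 2) := by gcongr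
    _ = N * T⁻¹ / l ^ 2 * l + B * (N * T⁻¹ / l ^ 2) := by field_simp
    _ ≤ (1 + B) * (N * T⁻¹ / l ^ 2) := by
        rw [add_mul, one_mul]
        gcongr
        exact mul_le_of_le_one_right (by positivity) hl1

lemma rpow_neg_one_third_pow_succ (hT : 1 ≤ T) (j : ℕ) :
    (T ^ (-(1 / 3 : ℝ) ^ (j + 1))) ^ 3 = T ^ (-(1 / 3 : ℝ) ^ j) := by
  rw [← Real.rpow_mul_natCast (by positivity)]
  congr 1
  push_cast
  ring

lemma one_le_mul_rpow_neg_one_third_pow (hB : 1 ≤ B) (hT : 1 ≤ T) (hTN : 2 * B * T ≤ N) (j : ℕ) :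
    1 ≤ N * T ^ (-(1 / 3 : ℝ) ^ j) := by
  have hT1 : T⁻¹ ≤ T ^ (-(1 / 3 : ℝ) ^ j) := by
    rw [← Real.rpow_neg_one]
    exact Real.rpow_le_rpow_of_exponent_le hT
      (neg_le_neg (pow_le_one₀ (by norm_num) (by norm_num)))
  calc (1 : ℝ) = T * T⁻¹ := (mul_inv_cancel₀ (by positivity)).symm
    _ ≤ N * T ^ (-(1 / 3 : ℝ) ^ j) := by
        gcongr
        nlinarith

-- The interval on which `Δ^(j+1) f` is small is short and is estimated trivially; on the two
-- remaining ones the bound for `j` applies, with a smaller `l`.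
lemma norm_sum_eC_le_of_le_fwdDiff_iter (hB : 1 ≤ B) (hT : 1 ≤ T) (hTN : 2 * B * T ≤ N) (j : ℕ) :
    ∀ {f : ℕ → ℝ} {a b : ℕ} {l : ℝ}, b ≤ a + N → 0 < l → l ≤ 1 →
    (∀ n ∈ Ico a b, |Δ_[1] f n| ≤ B * (T / N) ∧ |Δ_[1] ^[2] f n| ≤ B * (T / N ^ 2)) →
    (∀ n ∈ Ico a b, l * (T / N ^ (j + 1)) ≤ Δ_[1] ^[j + 1] f n) →
    ‖∑ n ∈ Ico a b, eC (f n)‖ ≤ 4 ^ j * (1 + B) * (N * T ^ (-(1 / 3 : ℝ) ^ j) / l ^ 2) := by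
  have hN : (0 : ℝ) < N := by nlinarith
  induction j with
  | zero =>
    intro f a b l hab hl hl1 hsmall hlow
    simp only [pow_zero, one_mul, Real.rpow_neg_one]
    refine norm_sum_eC_le_of_le_abs_fwdDiff hB hT hTN hab hl hl1 hsmall fun n hn => ?_
    simpa only [zero_add, pow_one, Function.iterate_one] using (hlow n hn).trans (le_abs_self _)
  | succ j ih =>
    intro f a b l hab hl hl1 hsmall hlow
    set t : ℝ := T ^ (-(1 / 3 : ℝ) ^ (j + 1))
    have ht1 : t ≤ 1 := Real.rpow_le_one_of_one_le_of_nonpos hT (neg_nonpos.2 (by positivity))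
    have hlt : l * t ≤ 1 := mul_le_one₀ hl1 (by positivity) ht1
    have hS : N * T ^ (-(1 / 3 : ℝ) ^ j) / (l * t) ^ 2 = N * t / l ^ 2 := by
      rw [← rpow_neg_one_third_pow_succ hT j]
      simp only [t]
      field_simp
    have hpieces := norm_sum_eC_le_of_le_fwdDiff_of_sublevel (f := f) (E := Δ_[1] ^[j + 1] f)
      (γ := l * (T / N ^ (j + 2))) (μ := l * t * (T / N ^ (j + 1)))
      (S := 4 ^ j * (1 + B) * (N * t / l ^ 2)) (a := a) (b := b) (by positivity) (by positivity)
      (by simpa only [Function.iterate_succ_apply'] using hlow)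
      (fun p hp hneg => by
        rw [← norm_sum_eC_neg, ← hS]
        refine ih (f := -f) (by lia) (by positivity) hlt (fun n hn => ?_) fun n hn => ?_
        · simpa only [fwdDiff_neg, fwdDiff_iter_neg, Pi.neg_apply, abs_neg] using
            hsmall n (Ico_subset_Ico_right hp hn)
        · simpa only [fwdDiff_iter_neg, Pi.neg_apply, le_neg] using hneg n hn)
      (fun q hq hpos => by
        rw [← hS]
        exact ih (by lia) (by positivity) hlt
          (fun n hn => hsmall n (Ico_subset_Ico_left hq hn)) hpos)
    have hμγ : 2 * (l * t * (T / N ^ (j + 1))) / (l * (T / N ^ (j + 2))) = 2 * (N * t) := by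
      field_simp
      ring
    have hNt : 1 ≤ N * t := one_le_mul_rpow_neg_one_third_pow hB hT hTN (j + 1)
    have hNtl : N * t ≤ N * t / l ^ 2 :=
      le_div_self (by positivity) (by positivity) (pow_le_one₀ hl.le hl1)
    have h4 : (1 : ℝ) ≤ 4 ^ j := one_le_pow₀ (by norm_num)
    rw [hμγ] at hpieces
    rw [pow_succ]
    nlinarith [mul_le_mul h4 hB zero_le_one (by positivity)]

lemma norm_sum_eC_le_of_fwdDiff_iter (hB : 1 ≤ B) (hT : 1 ≤ T) (hTN : 2 * B * T ≤ N) {j m : ℕ}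
    (hj : j ≤ m) {f : ℕ → ℝ} {a b : ℕ} {l : ℝ} (hab : b ≤ a + N) (hl : 0 < l) (hl1 : l ≤ 1)
    (hsmall : ∀ n ∈ Ico a b, |Δ_[1] f n| ≤ B * (T / N) ∧ |Δ_[1] ^[2] f n| ≤ B * (T / N ^ 2))
    (hsign : (∀ n ∈ Ico a b, l * (T / N ^ (j + 1)) ≤ Δ_[1] ^[j + 1] f n) ∨
      ∀ n ∈ Ico a b, Δ_[1] ^[j + 1] f n ≤ -(l * (T / N ^ (j + 1)))) :
    ‖∑ n ∈ Ico a b, eC (f n)‖ ≤ 4 ^ m * (1 + B) * (N * T ^ (-(1 / 3 : ℝ) ^ m) / l ^ 2) := by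
  wlog hpos : ∀ n ∈ Ico a b, l * (T / N ^ (j + 1)) ≤ Δ_[1] ^[j + 1] f n generalizing f
  · have hneg : ∀ n ∈ Ico a b, l * (T / N ^ (j + 1)) ≤ Δ_[1] ^[j + 1] (-f) n := fun n hn => by
      simpa only [fwdDiff_iter_neg, Pi.neg_apply, le_neg] using hsign.resolve_left hpos n hn
    rw [← norm_sum_eC_neg]
    refine this (f := -f) (fun n hn => ?_) (Or.inl hneg) hneg
    simpa only [fwdDiff_neg, fwdDiff_iter_neg, Pi.neg_apply, abs_neg] using hsmall n hn
  refine (norm_sum_eC_le_of_le_fwdDiff_iter hB hT hTN j hab hl hl1 hsmall hpos).trans ?_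
  gcongr 4 ^ ?_ * (1 + B) * (N * T ^ (-?_) / l ^ 2)
  · norm_num
  · exact pow_le_pow_of_le_one (by norm_num) (by norm_num) hj

end Oscillation

/-! ### Weyl–van der Corput differencing -/

/-- The copy of `z` restricted to `[a, b)` and translated by `h`. -/
def shiftedWindow (z : ℕ → ℂ) (a b k h : ℕ) : ℂ := if a + h ≤ k ∧ k < b + h then z (k - h) else 0

/-- The autocorrelation of `z`, restricted to `[a, b)`, at distance `d`. -/
def autocorr (z : ℕ → ℂ) (a b d : ℕ) : ℂ := ∑ n ∈ Ico a (b - d), z (n + d) * (starRingEnd ℂ) (z n)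

lemma sum_shiftedWindow (z : ℕ → ℂ) (a b : ℕ) {H h : ℕ} (hh : h < H) :
    ∑ k ∈ Ico a (b + H), shiftedWindow z a b k h = ∑ n ∈ Ico a b, z n := by
  simp only [shiftedWindow]
  rw [← sum_filter]
  exact sum_nbij' (fun k => k - h) (fun n => n + h) (by grind) (by grind) (by grind) (by grind)
    fun _ _ => rfl

lemma sum_shiftedWindow_mul_conj (z : ℕ → ℂ) (a b : ℕ) {H h h' : ℕ} (hh : h ≤ h') (hH : h' < H) :
    ∑ k ∈ Ico a (b + H), shiftedWindow z a b k h * (starRingEnd ℂ) (shiftedWindow z a b k h') =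
      autocorr z a b (h' - h) := by
  have hmul (k : ℕ) : shiftedWindow z a b k h * (starRingEnd ℂ) (shiftedWindow z a b k h') =
      if a + h' ≤ k ∧ k < b + h then z (k - h) * (starRingEnd ℂ) (z (k - h')) else 0 := by
    grind [shiftedWindow]
  simp only [hmul, autocorr]
  rw [← sum_filter]
  refine sum_nbij' (fun k => k - h') (fun n => n + h') (by grind) (by grind) (by grind) (by grind)
    fun k hk => ?_
  simp only [mem_filter] at hk
  rw [show k - h' + (h' - h) = k - h by lia]

lemma norm_sum_shiftedWindow_mul_conj (z : ℕ → ℂ) (a b : ℕ) {H h h' : ℕ} (hh : h < H)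
    (hh' : h' < H) :
    ‖∑ k ∈ Ico a (b + H), shiftedWindow z a b k h * (starRingEnd ℂ) (shiftedWindow z a b k h')‖ =
      ‖autocorr z a b (h.dist h')‖ := by
  wlog hle : h ≤ h' generalizing h h'
  · rw [Nat.dist_comm, ← this hh' hh (le_of_not_ge hle), ← RCLike.norm_conj, map_sum]
    simp only [map_mul, Complex.conj_conj, mul_comm]
  rw [sum_shiftedWindow_mul_conj z a b hle hh', Nat.dist_eq_sub_of_le hle]

lemma norm_autocorr_le {z : ℕ → ℂ} (hz : ∀ n, ‖z n‖ ≤ 1) (a b d : ℕ) :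
    ‖autocorr z a b d‖ ≤ (b - a : ℕ) := by
  have hcard : #(Ico a (b - d)) ≤ b - a := by
    rw [Nat.card_Ico]
    lia
  calc ‖autocorr z a b d‖ ≤ ∑ _n ∈ Ico a (b - d), (1 : ℝ) := by
        refine norm_sum_le_of_le _ fun _ _ => ?_
        rw [norm_mul, RCLike.norm_conj]
        exact mul_le_one₀ (hz _) (norm_nonneg _) (hz _)
    _ ≤ (b - a : ℕ) := by
        rw [sum_const, nsmul_eq_mul, mul_one]
        exact_mod_cast hcard

lemma sum_norm_sum_sq_le {κ η : Type*} (I : Finset κ) (J : Finset η) (w : κ → η → ℂ) :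
    ∑ k ∈ I, ‖∑ h ∈ J, w k h‖ ^ 2 ≤
      ∑ h ∈ J, ∑ h' ∈ J, ‖∑ k ∈ I, w k h * (starRingEnd ℂ) (w k h')‖ := by
  have expand : ((∑ k ∈ I, ‖∑ h ∈ J, w k h‖ ^ 2 : ℝ) : ℂ) =
      ∑ h ∈ J, ∑ h' ∈ J, ∑ k ∈ I, w k h * (starRingEnd ℂ) (w k h') := by
    push_cast
    simp only [← Complex.mul_conj', map_sum, sum_mul_sum]
    rw [sum_comm]
    exact sum_congr rfl fun h _ => sum_comm
  calc ∑ k ∈ I, ‖∑ h ∈ J, w k h‖ ^ 2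
      = ‖((∑ k ∈ I, ‖∑ h ∈ J, w k h‖ ^ 2 : ℝ) : ℂ)‖ := by
        rw [Complex.norm_real, Real.norm_of_nonneg (by positivity)]
    _ ≤ _ := by
        rw [expand]
        exact norm_sum_le_of_le _ fun h _ => norm_sum_le _ _

lemma sq_mul_norm_sum_le_sum_autocorr (z : ℕ → ℂ) (a b H : ℕ) :
    (H * ‖∑ n ∈ Ico a b, z n‖) ^ 2 ≤
      (b - a + H : ℕ) * ∑ h ∈ range H, ∑ h' ∈ range H, ‖autocorr z a b (h.dist h')‖ := by
  set I := Ico a (b + H) with hI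
  have hsum : (H : ℂ) * ∑ n ∈ Ico a b, z n = ∑ k ∈ I, ∑ h ∈ range H, shiftedWindow z a b k h := by
    rw [sum_comm, sum_congr rfl fun h hh => sum_shiftedWindow z a b (mem_range.1 hh), sum_const,
      card_range, nsmul_eq_mul]
  calc (H * ‖∑ n ∈ Ico a b, z n‖) ^ 2
      = ‖∑ k ∈ I, ∑ h ∈ range H, shiftedWindow z a b k h‖ ^ 2 := by
        rw [← hsum, norm_mul, Complex.norm_natCast]
    _ ≤ (∑ k ∈ I, ‖∑ h ∈ range H, shiftedWindow z a b k h‖) ^ 2 := by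
        gcongr
        exact norm_sum_le _ _
    _ ≤ #I * ∑ k ∈ I, ‖∑ h ∈ range H, shiftedWindow z a b k h‖ ^ 2 := sq_sum_le_card_mul_sum_sq
    _ ≤ (b - a + H : ℕ) * ∑ h ∈ range H, ∑ h' ∈ range H,
          ‖∑ k ∈ I, shiftedWindow z a b k h * (starRingEnd ℂ) (shiftedWindow z a b k h')‖ := by
        gcongr
        · rw [hI, Nat.card_Ico]
          lia
        · exact sum_norm_sum_sq_le _ _ _
    _ = _ := by
        congr 1
        exact sum_congr rfl fun h hh => sum_congr rfl fun h' hh' =>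
          norm_sum_shiftedWindow_mul_conj z a b (mem_range.1 hh) (mem_range.1 hh')

lemma sum_range_dist_le {γ : ℕ → ℝ} {s H h : ℕ} {G Y : ℝ} (hY : 0 ≤ Y) (hγ : ∀ d, γ d ≤ G)
    (hγY : ∀ d, s < d → d < H → γ d ≤ Y) (hG : 0 ≤ G) (hh : h < H) :
    ∑ h' ∈ range H, γ (h.dist h') ≤ (2 * s + 1) * G + H * Y := by
  have hpt : ∀ h' ∈ range H, γ (h.dist h') ≤ (if h' ∈ Icc (h - s) (h + s) then G else 0) + Y := by
    intro h' hh'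
    split_ifs with hmem
    · linarith [hγ (h.dist h')]
    · rw [zero_add]
      refine hγY _ ?_ ?_ <;> grind [Nat.dist]
  have hcard : (#{h' ∈ range H | h' ∈ Icc (h - s) (h + s)} : ℝ) ≤ 2 * s + 1 := by
    have hle : #{h' ∈ range H | h' ∈ Icc (h - s) (h + s)} ≤ #(Icc (h - s) (h + s)) :=
      card_le_card fun x hx => (mem_filter.1 hx).2
    rw [Nat.card_Icc] at hle
    exact_mod_cast (by lia : _ ≤ 2 * s + 1)
  calc ∑ h' ∈ range H, γ (h.dist h')
      ≤ ∑ h' ∈ range H, ((if h' ∈ Icc (h - s) (h + s) then G else 0) + Y) := sum_le_sum hpt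
    _ = #{h' ∈ range H | h' ∈ Icc (h - s) (h + s)} * G + H * Y := by
        rw [sum_add_distrib, ← sum_filter, sum_const, sum_const, card_range, nsmul_eq_mul,
          nsmul_eq_mul]
    _ ≤ (2 * s + 1) * G + H * Y := by gcongr

section Differencing

variable {N H : ℕ} {σ X : ℝ}

lemma norm_sum_sq_le_of_autocorr (hH : 0 < H) (hHN : H ≤ N) (hσH : 1 ≤ σ * H) {z : ℕ → ℂ}
    (hz : ∀ n, ‖z n‖ ≤ 1) {a b : ℕ} (hab : b ≤ a + N) (hX : 0 ≤ X)
    (hcorr : ∀ d : ℕ, σ * H ≤ d → d < H → ‖autocorr z a b d‖ ≤ X * N) :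
    ‖∑ n ∈ Ico a b, z n‖ ^ 2 ≤ N ^ 2 * (6 * σ + 2 * X) := by
  have hs : (⌊σ * H⌋₊ : ℝ) ≤ σ * H := Nat.floor_le (by linarith)
  have hlen : ((b - a : ℕ) : ℝ) ≤ N := by exact_mod_cast (by lia : b - a ≤ N)
  have hHN' : (H : ℝ) ≤ N := by exact_mod_cast hHN
  have hrow (h : ℕ) (hh : h ∈ range H) :
      ∑ h' ∈ range H, ‖autocorr z a b (h.dist h')‖ ≤ 3 * (σ * H) * N + H * (X * N) :=
    calc ∑ h' ∈ range H, ‖autocorr z a b (h.dist h')‖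
        ≤ (2 * ⌊σ * H⌋₊ + 1) * N + H * (X * N) :=
          sum_range_dist_le (γ := fun d => ‖autocorr z a b d‖) (by positivity)
            (fun d => (norm_autocorr_le hz a b d).trans hlen)
            (fun d hd => hcorr d (Nat.lt_of_floor_lt hd).le) N.cast_nonneg (mem_range.1 hh)
      _ ≤ 3 * (σ * H) * N + H * (X * N) := by
          gcongr
          linarith
  have hbound : (H * ‖∑ n ∈ Ico a b, z n‖) ^ 2 ≤ H ^ 2 * (N ^ 2 * (6 * σ + 2 * X)) :=
    calc (H * ‖∑ n ∈ Ico a b, z n‖) ^ 2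
        ≤ (b - a + H : ℕ) * ∑ h ∈ range H, ∑ h' ∈ range H, ‖autocorr z a b (h.dist h')‖ :=
          sq_mul_norm_sum_le_sum_autocorr z a b H
      _ ≤ (N + N) * ∑ h ∈ range H, (3 * (σ * H) * N + H * (X * N)) := by
          push_cast
          gcongr with h hh
          exact hrow h hh
      _ = H ^ 2 * (N ^ 2 * (6 * σ + 2 * X)) := by
          rw [sum_const, card_range, nsmul_eq_mul]
          ring
  rw [mul_pow] at hbound
  exact le_of_mul_le_mul_left hbound (by positivity)

/-- Iterated forward differences, whose steps are the entries of `l`. -/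
def fwdDiffs {M G : Type*} [AddCommMonoid M] [AddCommGroup G] (l : List M) (f : M → G) : M → G :=
  l.foldl (fun g h => Δ_[h] g) f

lemma norm_sum_eC_le_of_fwdDiffs (hH : 0 < H) (hHN : H ≤ N) (hσH : 1 ≤ σ * H) (hσX : σ ≤ X)
    (hX1 : X ≤ 1) (Q : ℕ) :
    ∀ {f : ℕ → ℝ} {a b : ℕ}, b ≤ a + N →
      (∀ l : List ℕ, l.length = Q → (∀ h ∈ l, σ * H ≤ h ∧ h < H) → ∀ b' ≤ b,
        ‖∑ n ∈ Ico a b', eC (fwdDiffs l f n)‖ ≤ X * N) →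
      ‖∑ n ∈ Ico a b, eC (f n)‖ ≤ 10 * X ^ ((1 / 2 : ℝ) ^ Q) * N := by
  have hσ : 0 < σ := pos_of_mul_pos_left (one_pos.trans_le hσH) (Nat.cast_nonneg H)
  have hX0 : 0 < X := hσ.trans_le hσX
  induction Q with
  | zero =>
    intro f a b _ h
    have hbase := h [] rfl (by simp only [List.not_mem_nil, false_imp_iff, implies_true]) b le_rfl
    rw [pow_zero, Real.rpow_one]
    refine hbase.trans ?_
    gcongr
    linarith
  | succ Q ih =>
    intro f a b hab h
    set Y : ℝ := X ^ ((1 / 2 : ℝ) ^ Q)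
    set Z : ℝ := X ^ ((1 / 2 : ℝ) ^ (Q + 1))
    have hXY : X ≤ Y :=
      Real.self_le_rpow_of_le_one hX0.le hX1 (pow_le_one₀ (by norm_num) (by norm_num))
    have hYZ : Y = Z ^ 2 := by
      simp only [Y, Z]
      rw [← Real.rpow_mul_natCast hX0.le]
      congr 1
      push_cast
      ring
    have hcorr (d : ℕ) (hd : σ * H ≤ d) (hdH : d < H) :
        ‖autocorr (fun n => eC (f n)) a b d‖ ≤ 10 * Y * N := by
      simp only [autocorr, ← eC_sub]
      refine ih (f := Δ_[d] f) (by lia) fun l hl hlmem b' hb' => ?_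
      refine h (d :: l) (by rw [List.length_cons, hl]) ?_ b' (by lia)
      rw [List.forall_mem_cons]
      exact ⟨⟨hd, hdH⟩, hlmem⟩
    have hsq : ‖∑ n ∈ Ico a b, eC (f n)‖ ^ 2 ≤ (10 * Z * N) ^ 2 :=
      calc ‖∑ n ∈ Ico a b, eC (f n)‖ ^ 2 ≤ N ^ 2 * (6 * σ + 2 * (10 * Y)) :=
            norm_sum_sq_le_of_autocorr hH hHN hσH (fun n => (norm_eC _).le) hab (by positivity)
              hcorr
        _ ≤ N ^ 2 * (100 * Y) := by gcongr; linarith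
        _ = (10 * Z * N) ^ 2 := by rw [hYZ]; ring
    exact le_of_sq_le_sq hsq (by positivity)

end Differencing

/-! ### Differences and derivatives of the smooth phase -/

lemma exists_sub_eq_mul_of_hasDerivAt {f f' : ℝ → ℝ} {x h : ℝ} (hh : 0 ≤ h)
    (hf : ∀ t, x ≤ t → HasDerivAt f (f' t) t) :
    ∃ ζ, x ≤ ζ ∧ ζ ≤ x + h ∧ f (x + h) - f x = h * f' ζ := by
  rcases hh.eq_or_lt with rfl | hh
  · exact ⟨x, le_rfl, by simp, by simp⟩
  obtain ⟨ζ, hζ, hslope⟩ := exists_hasDerivAt_eq_slope f f' (lt_add_of_pos_right x hh)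
    (fun t ht => (hf t ht.1).continuousAt.continuousWithinAt) (fun t ht => hf t ht.1.le)
  refine ⟨ζ, hζ.1.le, hζ.2.le, ?_⟩
  rw [hslope, add_sub_cancel_left, mul_div_cancel₀ _ hh.ne']

lemma fwdDiffs_replicate {M G : Type*} [AddCommMonoid M] [AddCommGroup G] (j : ℕ) (h : M)
    (f : M → G) : fwdDiffs (List.replicate j h) f = Δ_[h] ^[j] f := by
  induction j generalizing f with
  | zero => rfl
  | succ _ ih => exact ih _

lemma exists_fwdDiffs_eq_prod_mul (l : List ℕ) : ∀ {f : ℕ → ℝ → ℝ} {n : ℕ},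
    (∀ k t, (n : ℝ) ≤ t → HasDerivAt (f k) (f (k + 1) t) t) →
      ∃ ζ : ℝ, n ≤ ζ ∧ ζ ≤ n + l.sum ∧
        fwdDiffs l (fun n : ℕ => f 0 n) n = l.prod * f l.length ζ := by
  induction l with
  | nil => exact fun {f n} _ => ⟨n, le_rfl, by simp, by simp [fwdDiffs]⟩
  | cons h l ih =>
    intro f n hf
    have hg : ∀ k t, (n : ℝ) ≤ t → HasDerivAt (fun t => f k (t + h) - f k t)
        (f (k + 1) (t + h) - f (k + 1) t) t := fun k t ht =>
      ((hf k (t + h) (ht.trans (by simp))).comp_add_const t (h : ℝ)).sub (hf k t ht)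
    obtain ⟨ζ, hnζ, hζ, hl⟩ := ih (f := fun k t => f k (t + h) - f k t) hg
    obtain ⟨ζ', hζζ', hζ', hstep⟩ := exists_sub_eq_mul_of_hasDerivAt (Nat.cast_nonneg h)
      fun t ht => hf l.length t (hnζ.trans ht)
    refine ⟨ζ', hnζ.trans hζζ', ?_, ?_⟩
    · rw [List.sum_cons, Nat.cast_add]
      linarith
    · have hcons : fwdDiffs (h :: l) (fun n : ℕ => f 0 n)
          = fwdDiffs l (fun n : ℕ => f 0 (n + h) - f 0 n) := by
        simp only [← Nat.cast_add]
        rfl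
      rw [hcons, hl, hstep, List.prod_cons, List.length_cons, Nat.cast_mul]
      ring

lemma exists_fwdDiff_iter_fwdDiffs_eq_prod_mul {f : ℕ → ℝ → ℝ} {n : ℕ}
    (hf : ∀ k t, (n : ℝ) ≤ t → HasDerivAt (f k) (f (k + 1) t) t) (l : List ℕ) (j : ℕ) :
    ∃ ζ : ℝ, n ≤ ζ ∧ ζ ≤ n + (l.sum + j) ∧
      Δ_[1] ^[j] (fwdDiffs l (fun n : ℕ => f 0 n)) n = l.prod * f (l.length + j) ζ := by
  obtain ⟨ζ, hnζ, hζ, h⟩ := exists_fwdDiffs_eq_prod_mul (l ++ List.replicate j 1) hf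
  refine ⟨ζ, hnζ, by simpa using hζ, ?_⟩
  rw [← fwdDiffs_replicate]
  simpa [fwdDiffs] using h

section Phase

variable {m : ℕ}

/-- The `k`-th derivative of the smooth phase `t ↦ ∑ i, θ i * t ^ c i` on `t > 0`. -/
def phase (c θ : Fin m → ℝ) (k : ℕ) (t : ℝ) : ℝ :=
  ∑ i, θ i * ((descPochhammer ℝ k).eval (c i) * t ^ (c i - k))

/-- The size of the smooth phase at scale `N`: the largest of the `|θ i| * N ^ c i`. -/
def phaseSize (c θ : Fin m → ℝ) (N : ℝ) : ℝ :=
  ‖fun i => θ i * N ^ c i‖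

lemma phase_zero (c θ : Fin m → ℝ) (t : ℝ) : phase c θ 0 t = ∑ i, θ i * t ^ c i := by
  simp [phase]

lemma hasDerivAt_phase (c θ : Fin m → ℝ) (k : ℕ) {t : ℝ} (ht : 0 < t) :
    HasDerivAt (phase c θ k) (phase c θ (k + 1) t) t := by
  refine HasDerivAt.fun_sum fun i _ => HasDerivAt.const_mul _ ?_
  rw [descPochhammer_succ_eval, mul_assoc]
  refine HasDerivAt.const_mul _ ?_
  have := Real.hasDerivAt_rpow_const (x := t) (p := c i - k) (Or.inl ht.ne')
  rwa [sub_sub, ← Nat.cast_succ] at this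

lemma rpow_le_two_rpow_abs {s : ℝ} (h1 : 1 / 2 ≤ s) (h2 : s ≤ 2) (e : ℝ) : s ^ e ≤ 2 ^ |e| := by
  have hs : 0 < s := by linarith
  rcases le_total 0 e with he | he
  · rw [abs_of_nonneg he]
    exact Real.rpow_le_rpow hs.le h2 he
  · rw [abs_of_nonpos he, Real.rpow_neg two_pos.le, ← Real.inv_rpow two_pos.le]
    exact Real.rpow_le_rpow_of_nonpos (by norm_num) (by linarith) he

lemma inv_two_rpow_abs_le_rpow {s : ℝ} (h1 : 1 / 2 ≤ s) (h2 : s ≤ 2) (e : ℝ) :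
    ((2 : ℝ) ^ |e|)⁻¹ ≤ s ^ e := by
  have hs : 0 < s := by linarith
  have := rpow_le_two_rpow_abs h1 h2 (-e)
  rw [abs_neg, Real.rpow_neg hs.le] at this
  exact inv_le_of_inv_le₀ (by positivity) this

lemma pow_mul_phase (c θ : Fin m → ℝ) (k : ℕ) {N t : ℝ} (hN : 0 < N) (ht : 0 < t) :
    N ^ k * phase c θ k t
      = ∑ i, θ i * N ^ c i * ((descPochhammer ℝ k).eval (c i) * (t / N) ^ (c i - k)) := by
  rw [phase, mul_sum]
  refine sum_congr rfl fun i _ => ?_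
  rw [Real.div_rpow ht.le hN.le, Real.rpow_sub hN, Real.rpow_natCast]
  field_simp

lemma abs_pow_mul_phase_le (c θ : Fin m → ℝ) (k : ℕ) {N t : ℝ} (hN : 0 < N) (h1 : N / 2 ≤ t)
    (h2 : t ≤ 2 * N) :
    |N ^ k * phase c θ k t|
      ≤ (∑ i, |(descPochhammer ℝ k).eval (c i)| * 2 ^ |c i - k|) * phaseSize c θ N := by
  have hs1 : 1 / 2 ≤ t / N := by rw [le_div_iff₀ hN]; linarith
  have hs2 : t / N ≤ 2 := by rw [div_le_iff₀ hN]; linarith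
  rw [pow_mul_phase c θ k hN (by linarith), sum_mul]
  refine (abs_sum_le_sum_abs _ _).trans (sum_le_sum fun i _ => ?_)
  rw [mul_comm, abs_mul, abs_mul, Real.abs_rpow_of_nonneg (by linarith),
    abs_of_pos (by linarith : 0 < t / N)]
  gcongr
  · exact rpow_le_two_rpow_abs hs1 hs2 _
  · exact norm_le_pi_norm (fun i => θ i * N ^ c i) i

lemma exists_abs_pow_mul_phase_le (c : Fin m → ℝ) (K : ℕ) : ∃ B : ℝ, 1 ≤ B ∧ ∀ k ≤ K,
    ∀ {N t : ℝ} {θ : Fin m → ℝ}, 0 < N → N / 2 ≤ t → t ≤ 2 * N →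
      |N ^ k * phase c θ k t| ≤ B * phaseSize c θ N := by
  set b : ℕ → ℝ := fun k => ∑ i, |(descPochhammer ℝ k).eval (c i)| * 2 ^ |c i - k|
  have hb : ∀ k, 0 ≤ b k := fun k => sum_nonneg fun i _ => by positivity
  refine ⟨1 + ∑ k ∈ range (K + 1), b k, le_add_of_nonneg_right (sum_nonneg fun k _ => hb k),
    fun k hk N t θ hN h1 h2 => (abs_pow_mul_phase_le c θ k hN h1 h2).trans ?_⟩
  have hbk : b k ≤ ∑ k ∈ range (K + 1), b k :=
    single_le_sum (fun k _ => hb k) (mem_range.2 (Nat.lt_succ_of_le hk))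
  exact mul_le_mul_of_nonneg_right (by linarith) (norm_nonneg _)

lemma descPochhammer_eval_ne_zero {x : ℝ} (hx : ∀ k : ℤ, x ≠ k) (n : ℕ) :
    (descPochhammer ℝ n).eval x ≠ 0 := by
  rw [descPochhammer_eval_eq_prod_range]
  refine prod_ne_zero_iff.2 fun j _ h => hx j ?_
  push_cast
  linarith

lemma descPochhammer_eval_add (x : ℝ) (n r : ℕ) : (descPochhammer ℝ (n + r)).eval x
    = (descPochhammer ℝ n).eval x * (descPochhammer ℝ r).eval (x - n) := by
  simp [← descPochhammer_mul]

lemma det_descPochhammer_ne_zero {c : Fin m → ℝ} (hc : Function.Injective c)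
    (hint : ∀ i, ∀ k : ℤ, c i ≠ k) (n : ℕ) :
    (Matrix.of fun i r : Fin m => (descPochhammer ℝ (n + r)).eval (c i)).det ≠ 0 := by
  have hinj : Function.Injective fun i => c i - n := fun i j h => hc (sub_left_injective h)
  simp only [descPochhammer_eval_add]
  have hvand : (Matrix.of fun i r : Fin m =>
      (descPochhammer ℝ (r : ℕ)).eval (c i - n)).det ≠ 0 := by
    rw [← Matrix.det_eval_matrixOfPolynomials_eq_det_vandermonde (fun i => c i - n)
      (fun r => descPochhammer ℝ (r : ℕ)) (fun r => descPochhammer_natDegree ℝ r)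
      (fun r => monic_descPochhammer ℝ r)]
    exact Matrix.det_vandermonde_ne_zero_iff.2 hinj
  have hmul := Matrix.det_mul_column (fun i => (descPochhammer ℝ n).eval (c i))
    (Matrix.of fun i r : Fin m => (descPochhammer ℝ (r : ℕ)).eval (c i - n))
  simp only [Matrix.of_apply] at hmul
  rw [hmul]
  exact mul_ne_zero (prod_ne_zero_iff.2 fun i _ => descPochhammer_eval_ne_zero (hint i) n) hvand

lemma exists_mul_norm_le_norm_vecMul {ι : Type*} [Fintype ι] [DecidableEq ι] {M : Matrix ι ι ℝ}
    (hM : M.det ≠ 0) : ∃ β : ℝ, 0 < β ∧ ∀ y : ι → ℝ, β * ‖y‖ ≤ ‖Matrix.vecMul y M‖ := by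
  have hinj : Function.Injective M.vecMulLinear :=
    Matrix.vecMul_injective_of_isUnit ((Matrix.isUnit_iff_isUnit_det M).2 hM.isUnit)
  obtain ⟨K, hK, hKM⟩ := M.vecMulLinear.injective_iff_antilipschitz.1 hinj
  refine ⟨K⁻¹, by positivity, fun y => ?_⟩
  rw [inv_mul_le_iff₀ (by positivity)]
  exact hKM.le_mul_norm (map_zero _) y

lemma vecMul_descPochhammer_eq (c θ : Fin m → ℝ) (n : ℕ) {N t : ℝ} (hN : 0 < N) (ht : 0 < t)
    (r : Fin m) :
    Matrix.vecMul (fun i => θ i * N ^ c i * (t / N) ^ (c i - n))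
        (Matrix.of fun i r : Fin m => (descPochhammer ℝ (n + r)).eval (c i)) r
      = (t / N) ^ (r : ℕ) * (N ^ (n + r : ℕ) * phase c θ (n + r) t) := by
  have hs : 0 < t / N := div_pos ht hN
  rw [pow_mul_phase c θ _ hN ht, Matrix.vecMul, dotProduct, mul_sum]
  refine sum_congr rfl fun i _ => ?_
  have hpow : (t / N) ^ (c i - n) = (t / N) ^ (r : ℕ) * (t / N) ^ (c i - (n + r : ℕ)) := by
    rw [← Real.rpow_natCast, ← Real.rpow_add hs]
    push_cast
    ring_nf
  rw [hpow, Matrix.of_apply]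
  ring

lemma phaseSize_le_mul_norm (c θ x : Fin m → ℝ) {N s : ℝ} (h1 : 1 / 2 ≤ s) (h2 : s ≤ 2) :
    phaseSize c θ N ≤ 2 ^ ‖x‖ * ‖fun i => θ i * N ^ c i * s ^ x i‖ := by
  refine (pi_norm_le_iff_of_nonneg (by positivity)).2 fun i => ?_
  have hx : (2 ^ ‖x‖)⁻¹ ≤ s ^ x i := by
    refine le_trans ?_ (inv_two_rpow_abs_le_rpow h1 h2 (x i))
    gcongr
    exacts [one_le_two, norm_le_pi_norm x i]
  rw [← inv_mul_le_iff₀ (by positivity), mul_comm]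
  calc ‖θ i * N ^ c i‖ * (2 ^ ‖x‖)⁻¹ ≤ ‖θ i * N ^ c i‖ * ‖s ^ x i‖ :=
        mul_le_mul_of_nonneg_left (hx.trans (le_abs_self _)) (norm_nonneg _)
    _ = ‖θ i * N ^ c i * s ^ x i‖ := (norm_mul _ _).symm
    _ ≤ _ := norm_le_pi_norm (fun i => θ i * N ^ c i * s ^ x i) i

lemma exists_mul_phaseSize_le_abs_phase {c : Fin m → ℝ} (hc : Function.Injective c)
    (hint : ∀ i, ∀ k : ℤ, c i ≠ k) (n : ℕ) :
    ∃ β : ℝ, 0 < β ∧ ∀ {N t : ℝ} {θ : Fin m → ℝ}, 0 < N → 0 < phaseSize c θ N → N / 2 ≤ t →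
      t ≤ 2 * N → ∃ r < m, β * phaseSize c θ N ≤ |N ^ (n + r) * phase c θ (n + r) t| := by
  obtain ⟨β, hβ, hM⟩ := exists_mul_norm_le_norm_vecMul (det_descPochhammer_ne_zero hc hint n)
  set x : Fin m → ℝ := fun i => c i - n
  refine ⟨β / (2 ^ ‖x‖ * 2 ^ m), by positivity, fun {N t θ} hN hS h1 h2 => ?_⟩
  by_contra! hsmall
  have ht : 0 < t := by linarith
  have hs2 : t / N ≤ 2 := by rw [div_le_iff₀ hN]; linarith
  have hs1 : 1 / 2 ≤ t / N := by rw [le_div_iff₀ hN]; linarith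
  have hy := phaseSize_le_mul_norm c θ x (N := N) hs1 hs2
  set y : Fin m → ℝ := fun i => θ i * N ^ c i * (t / N) ^ x i
  have hrow : ‖Matrix.vecMul y (Matrix.of fun i r : Fin m =>
      (descPochhammer ℝ (n + r)).eval (c i))‖ < β / 2 ^ ‖x‖ * phaseSize c θ N := by
    refine (pi_norm_lt_iff (by positivity)).2 fun r => ?_
    rw [vecMul_descPochhammer_eq c θ n hN ht r, Real.norm_eq_abs, abs_mul,
      abs_of_pos (by positivity : 0 < (t / N) ^ (r : ℕ))]
    have hpow : (t / N) ^ (r : ℕ) ≤ 2 ^ m :=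
      (pow_le_pow_left₀ (by positivity) hs2 _).trans (pow_le_pow_right₀ one_le_two r.2.le)
    calc _ ≤ 2 ^ m * |N ^ (n + r : ℕ) * phase c θ (n + r) t| := by gcongr
      _ < 2 ^ m * (β / (2 ^ ‖x‖ * 2 ^ m) * phaseSize c θ N) := by
        gcongr
        exact hsmall r r.2
      _ = _ := by field_simp
  have hβy : β / 2 ^ ‖x‖ * phaseSize c θ N ≤ β * ‖y‖ := by
    rw [div_mul_eq_mul_div, div_le_iff₀ (by positivity), mul_assoc, mul_comm ‖y‖]
    gcongr
  exact absurd ((hM y).trans_lt hrow) (not_lt.2 hβy)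

lemma abs_pow_mul_phase_sub_le {c θ : Fin m → ℝ} {k : ℕ} {N B s t : ℝ} (hN : 0 < N)
    (hB : ∀ u, N / 2 ≤ u → u ≤ 2 * N → |N ^ (k + 1) * phase c θ (k + 1) u| ≤ B)
    (hs : N / 2 ≤ s) (hst : s ≤ t) (ht : t ≤ 2 * N) :
    |N ^ k * phase c θ k t - N ^ k * phase c θ k s| ≤ B / N * (t - s) := by
  have hpos : ∀ u, s ≤ u → 0 < u := fun u hu => by linarith
  have hderiv : ∀ u ∈ Set.Icc s t, ‖N ^ k * phase c θ (k + 1) u‖ ≤ B / N := by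
    intro u hu
    rw [le_div_iff₀ hN, Real.norm_eq_abs]
    have := hB u (hs.trans hu.1) (hu.2.trans ht)
    rwa [pow_succ, mul_right_comm, abs_mul, abs_of_pos hN] at this
  have := (convex_Icc s t).norm_image_sub_le_of_norm_hasDerivWithin_le
    (fun u hu => ((hasDerivAt_phase c θ k (hpos u hu.1)).const_mul (N ^ k)).hasDerivWithinAt)
    hderiv (Set.left_mem_Icc.2 hst) (Set.right_mem_Icc.2 hst)
  rwa [Real.norm_eq_abs, Real.norm_of_nonneg (sub_nonneg.2 hst)] at this

lemma exists_phase_large_of_same_sign {c : Fin m → ℝ} (hc : Function.Injective c)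
    (hint : ∀ i, ∀ k : ℤ, c i ≠ k) (n : ℕ) :
    ∃ β : ℝ, 0 < β ∧ ∃ η : ℝ, 0 < η ∧ ∀ {N s : ℝ} {θ : Fin m → ℝ}, 0 < N → 0 < phaseSize c θ N →
      N / 2 ≤ s → s ≤ N → ∃ r < m,
        (∀ t, s ≤ t → t ≤ s + η * N →
          β * phaseSize c θ N ≤ N ^ (n + r) * phase c θ (n + r) t) ∨
        ∀ t, s ≤ t → t ≤ s + η * N →
          N ^ (n + r) * phase c θ (n + r) t ≤ -(β * phaseSize c θ N) := by
  obtain ⟨β, hβ, hlow⟩ := exists_mul_phaseSize_le_abs_phase hc hint n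
  obtain ⟨B, hB, hup⟩ := exists_abs_pow_mul_phase_le c (n + m)
  refine ⟨β / 2, by positivity, min 1 (β / (2 * B)), by positivity, fun {N s θ} hN hS h1 h2 => ?_⟩
  obtain ⟨r, hr, hlarge⟩ := hlow hN hS h1 (by linarith)
  have hnear : ∀ t, s ≤ t → t ≤ s + min 1 (β / (2 * B)) * N →
      |N ^ (n + r) * phase c θ (n + r) t - N ^ (n + r) * phase c θ (n + r) s|
        ≤ β / 2 * phaseSize c θ N := by
    intro t hst hts
    have hη1 : min 1 (β / (2 * B)) * N ≤ 1 * N := by gcongr; exact min_le_left _ _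
    have hη2 : min 1 (β / (2 * B)) * N ≤ β / (2 * B) * N := by gcongr; exact min_le_right _ _
    calc _ ≤ B * phaseSize c θ N / N * (t - s) :=
          abs_pow_mul_phase_sub_le hN (fun u => hup (n + r + 1) (by lia) hN) h1 hst (by linarith)
      _ ≤ B * phaseSize c θ N / N * (β / (2 * B) * N) := by gcongr; linarith
      _ = β / 2 * phaseSize c θ N := by field_simp
  refine ⟨r, hr, (le_abs.1 hlarge).imp (fun h t hst hts => ?_) fun h t hst hts => ?_⟩ <;>
    linarith [abs_le.1 (hnear t hst hts)]

end Phase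

/-! ### Smooth exponential sums -/

lemma norm_sum_Ico_le_mul_of_blocks {z : ℕ → ℂ} {L b : ℕ} {E : ℝ} (k : ℕ) : ∀ {a : ℕ},
    (∀ a' b', a ≤ a' → b' ≤ b → b' ≤ a' + L → ‖∑ n ∈ Ico a' b', z n‖ ≤ E) → b ≤ a + k * L →
      ‖∑ n ∈ Ico a b, z n‖ ≤ k * E := by
  induction k with
  | zero => exact fun {a} _ hab => by simp [Ico_eq_empty_of_le (show b ≤ a by lia)]
  | succ k ih =>
    intro a hE hab
    rw [Nat.cast_succ, add_one_mul, add_comm]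
    rcases le_total b (a + L) with hb | hb
    · have hblock := hE a b le_rfl le_rfl hb
      exact hblock.trans (le_add_of_nonneg_right
        (mul_nonneg k.cast_nonneg ((norm_nonneg _).trans hblock)))
    · rw [← sum_Ico_consecutive z (Nat.le_add_right a L) hb]
      exact norm_add_le_of_le (hE a (a + L) le_rfl hb le_rfl)
        (ih (fun a' b' ha => hE a' b' (by lia)) (by lia))

section Phase

variable {m : ℕ} {c : Fin m → ℝ}

section Differenced

variable {θ : Fin m → ℝ} {l : List ℕ} {N T : ℝ} {n j : ℕ}

lemma exists_fwdDiff_iter_phase_eq (hN : 0 < N) (hS : 0 < phaseSize c θ N)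
    (hT : phaseSize c θ N * l.prod = T * N ^ l.length) (hn : 0 < n) (j : ℕ) :
    ∃ ζ : ℝ, n ≤ ζ ∧ ζ ≤ n + (l.sum + j) ∧
      Δ_[1] ^[j] (fwdDiffs l (fun n : ℕ => phase c θ 0 n)) n
        = T / N ^ j * (N ^ (l.length + j) * phase c θ (l.length + j) ζ / phaseSize c θ N) := by
  have hderiv : ∀ k t, (n : ℝ) ≤ t → HasDerivAt (phase c θ k) (phase c θ (k + 1) t) t :=
    fun k t ht => hasDerivAt_phase c θ k ((Nat.cast_pos.2 hn).trans_le ht)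
  obtain ⟨ζ, hnζ, hζ, h⟩ := exists_fwdDiff_iter_fwdDiffs_eq_prod_mul hderiv l j
  refine ⟨ζ, hnζ, hζ, ?_⟩
  rw [h, (eq_div_iff hS.ne').2 ((mul_comm _ _).trans hT), pow_add]
  field_simp

lemma mul_le_fwdDiff_iter_phase {β : ℝ} (hN : 0 < N) (hS : 0 < phaseSize c θ N) (hT0 : 0 ≤ T)
    (hT : phaseSize c θ N * l.prod = T * N ^ l.length) (hn : 0 < n)
    (hβ : ∀ t : ℝ, n ≤ t → t ≤ n + (l.sum + j) →
      β * phaseSize c θ N ≤ N ^ (l.length + j) * phase c θ (l.length + j) t) :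
    β * (T / N ^ j) ≤ Δ_[1] ^[j] (fwdDiffs l (fun n : ℕ => phase c θ 0 n)) n := by
  obtain ⟨ζ, hnζ, hζ, h⟩ := exists_fwdDiff_iter_phase_eq hN hS hT hn j
  rw [h, mul_comm]
  gcongr
  exact (le_div_iff₀ hS).2 (hβ ζ hnζ hζ)

lemma fwdDiff_iter_phase_le_mul {β : ℝ} (hN : 0 < N) (hS : 0 < phaseSize c θ N) (hT0 : 0 ≤ T)
    (hT : phaseSize c θ N * l.prod = T * N ^ l.length) (hn : 0 < n)
    (hβ : ∀ t : ℝ, n ≤ t → t ≤ n + (l.sum + j) →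
      N ^ (l.length + j) * phase c θ (l.length + j) t ≤ β * phaseSize c θ N) :
    Δ_[1] ^[j] (fwdDiffs l (fun n : ℕ => phase c θ 0 n)) n ≤ β * (T / N ^ j) := by
  obtain ⟨ζ, hnζ, hζ, h⟩ := exists_fwdDiff_iter_phase_eq hN hS hT hn j
  rw [h, mul_comm β]
  gcongr
  exact (div_le_iff₀ hS).2 (hβ ζ hnζ hζ)

lemma abs_fwdDiff_iter_phase_le {B : ℝ} (hN : 0 < N) (hS : 0 < phaseSize c θ N) (hT0 : 0 ≤ T)
    (hT : phaseSize c θ N * l.prod = T * N ^ l.length) (hn : 0 < n)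
    (hB : ∀ t : ℝ, n ≤ t → t ≤ n + (l.sum + j) →
      |N ^ (l.length + j) * phase c θ (l.length + j) t| ≤ B * phaseSize c θ N) :
    |Δ_[1] ^[j] (fwdDiffs l (fun n : ℕ => phase c θ 0 n)) n| ≤ B * (T / N ^ j) := by
  rw [abs_le, ← neg_mul]
  refine ⟨mul_le_fwdDiff_iter_phase hN hS hT0 hT hn fun t h1 h2 => ?_,
    fwdDiff_iter_phase_le_mul hN hS hT0 hT hn fun t h1 h2 => (abs_le.1 (hB t h1 h2)).2⟩
  rw [neg_mul]
  exact (abs_le.1 (hB t h1 h2)).1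

end Differenced

lemma norm_sum_eC_fwdDiffs_phase_le_of_sign {N : ℕ} {T B β R : ℝ} {θ : Fin m → ℝ} {l : List ℕ}
    {a b r : ℕ} (hS : 0 < phaseSize c θ N) (hT : phaseSize c θ N * l.prod = T * N ^ l.length)
    (hB : 1 ≤ B) (hT1 : 1 ≤ T) (hTN : 2 * B * T ≤ N) (hr : r < m) (hβ : 0 < β) (hβ1 : β ≤ 1)
    (ha : 0 < a) (hab : b ≤ a + N) (hbR : b + ((l.sum : ℝ) + (m + 1)) ≤ R)
    (hup : ∀ k ≤ l.length + 2, ∀ t : ℝ, a ≤ t → t ≤ R →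
      |N ^ k * phase c θ k t| ≤ B * phaseSize c θ N)
    (hsign : (∀ t : ℝ, a ≤ t → t ≤ R →
        β * phaseSize c θ N ≤ N ^ (l.length + (r + 1)) * phase c θ (l.length + (r + 1)) t) ∨
      ∀ t : ℝ, a ≤ t → t ≤ R →
        N ^ (l.length + (r + 1)) * phase c θ (l.length + (r + 1)) t ≤ -β * phaseSize c θ N) :
    ‖∑ n ∈ Ico a b, eC (fwdDiffs l (fun n : ℕ => phase c θ 0 n) n)‖
      ≤ 4 ^ m * (1 + B) * (N * T ^ (-(1 / 3 : ℝ) ^ m) / β ^ 2) := by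
  have hN : (0 : ℝ) < N := by nlinarith
  have hT0 : 0 ≤ T := by linarith
  have hr' : (r : ℝ) + 1 ≤ m := by exact_mod_cast hr
  have hwindow : ∀ n ∈ Ico a b, 0 < n ∧ (a : ℝ) ≤ n ∧ (n : ℝ) + 1 ≤ b := by
    intro n hn
    obtain ⟨han, hnb⟩ := mem_Ico.1 hn
    exact ⟨by lia, by exact_mod_cast han, by exact_mod_cast hnb⟩
  have hsmall : ∀ j : ℕ, j ≤ 2 → ∀ n ∈ Ico a b,
      |Δ_[1] ^[j] (fwdDiffs l (fun n : ℕ => phase c θ 0 n)) n| ≤ B * (T / N ^ j) := by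
    intro j hj n hn
    obtain ⟨hn0, han, hnb⟩ := hwindow n hn
    have hj' : (j : ℝ) ≤ 2 := by exact_mod_cast hj
    exact abs_fwdDiff_iter_phase_le hN hS hT0 hT hn0 fun t h1 h2 =>
      hup _ (by lia) t (by linarith) (by linarith)
  refine norm_sum_eC_le_of_fwdDiff_iter hB hT1 hTN hr.le hab hβ hβ1
    (fun n hn => ⟨by simpa using hsmall 1 (by norm_num) n hn, hsmall 2 le_rfl n hn⟩)
    (hsign.imp (fun h n hn => ?_) fun h n hn => ?_)
  all_goals obtain ⟨hn0, han, hnb⟩ := hwindow n hn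
  · exact mul_le_fwdDiff_iter_phase hN hS hT0 hT hn0 fun t h1 h2 =>
      h t (by linarith) (by rw [Nat.cast_succ] at h2; linarith)
  · rw [← neg_mul]
    exact fwdDiff_iter_phase_le_mul hN hS hT0 hT hn0 fun t h1 h2 =>
      h t (by linarith) (by rw [Nat.cast_succ] at h2; linarith)

lemma exists_norm_sum_eC_fwdDiffs_phase_le_of_short (hc : Function.Injective c)
    (hint : ∀ i, ∀ k : ℤ, c i ≠ k) (Q : ℕ) :
    ∃ C : ℝ, 0 < C ∧ ∃ κ : ℝ, 0 < κ ∧ ∃ η : ℝ, 0 < η ∧ ∀ {N : ℕ} {T : ℝ} {θ : Fin m → ℝ}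
      {l : List ℕ} {a b : ℕ}, 0 < N → 0 < phaseSize c θ N → l.length = Q →
      phaseSize c θ N * l.prod = T * (N : ℝ) ^ Q → 1 ≤ T → T ≤ η * N →
      (l.sum : ℝ) + (m + 1) ≤ η * N → N ≤ 2 * a → b ≤ N + 1 → (b : ℝ) ≤ a + η * N →
      ‖∑ n ∈ Ico a b, eC (fwdDiffs l (fun n : ℕ => phase c θ 0 n) n)‖ ≤ C * (N * T ^ (-κ)) := by
  obtain ⟨β, hβ, η, hη, hsign⟩ := exists_phase_large_of_same_sign hc hint (Q + 1)
  obtain ⟨B, hB, hup⟩ := exists_abs_pow_mul_phase_le c (Q + 2)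
  refine ⟨4 ^ m * (1 + B) / min β 1 ^ 2, by positivity, (1 / 3) ^ m, by positivity,
    min (η / 2) (1 / (2 * B)), by positivity, ?_⟩
  intro N T θ l a b hN hS hl hT hT1 hTη hsum hNa hbN hba
  subst hl
  rcases le_or_gt b a with hab | hab
  · rw [Ico_eq_empty_of_le hab, sum_empty, norm_zero]
    positivity
  have hN0 : (0 : ℝ) < N := Nat.cast_pos.2 hN
  have hNa' : (N : ℝ) ≤ 2 * a := by exact_mod_cast hNa
  have haN : (a : ℝ) ≤ N := by exact_mod_cast (by lia : a ≤ N)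
  have hη1 : min (η / 2) (1 / (2 * B)) * N ≤ η / 2 * N := by gcongr; exact min_le_left _ _
  have hη2 : 2 * B * (min (η / 2) (1 / (2 * B)) * N) ≤ N := by
    calc _ ≤ 2 * B * (1 / (2 * B) * N) := by gcongr; exact min_le_right _ _
      _ = N := by field_simp
  obtain ⟨r, hr, hlarge⟩ := hsign hN0 hS (s := a) (by linarith) haN
  have hmin : min β 1 * phaseSize c θ N ≤ β * phaseSize c θ N := by
    gcongr
    exact min_le_left _ _
  refine (norm_sum_eC_fwdDiffs_phase_le_of_sign
    (R := a + 2 * (min (η / 2) (1 / (2 * B)) * N)) hS hT hB hT1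
    (hη2.trans' (mul_le_mul_of_nonneg_left hTη (by positivity))) hr
    (lt_min hβ one_pos) (min_le_right _ _) (by lia) (by lia) (by linarith)
    (fun k hk t h1 h2 => hup k hk hN0 (by linarith) (by nlinarith)) ?_).trans_eq (by ring)
  rw [add_assoc, add_comm 1 r] at hlarge
  exact hlarge.imp (fun h t h1 h2 => hmin.trans (h t h1 (by linarith)))
    fun h t h1 h2 => (h t h1 (by linarith)).trans (by linarith)

lemma exists_norm_sum_eC_fwdDiffs_phase_le (hc : Function.Injective c)
    (hint : ∀ i, ∀ k : ℤ, c i ≠ k) (Q : ℕ) :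
    ∃ C : ℝ, 0 < C ∧ ∃ κ : ℝ, 0 < κ ∧ ∃ η : ℝ, 0 < η ∧ ∀ {N : ℕ} {T : ℝ} {θ : Fin m → ℝ}
      {l : List ℕ} {a b : ℕ}, 0 < N → 0 < phaseSize c θ N → l.length = Q →
      phaseSize c θ N * l.prod = T * (N : ℝ) ^ Q → 1 ≤ T → T ≤ η * N →
      (l.sum : ℝ) + (m + 1) ≤ η * N → N ≤ 2 * a → b ≤ N + 1 →
      ‖∑ n ∈ Ico a b, eC (fwdDiffs l (fun n : ℕ => phase c θ 0 n) n)‖ ≤ C * (N * T ^ (-κ)) := by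
  obtain ⟨C, hC, κ, hκ, η, hη, hshort⟩ :=
    exists_norm_sum_eC_fwdDiffs_phase_le_of_short hc hint Q
  refine ⟨⌈2 / η⌉₊ * C, by positivity, κ, hκ, η, hη, ?_⟩
  intro N T θ l a b hN hS hl hT hT1 hTη hsum hNa hbN
  have hηN : 0 ≤ η * N := by positivity
  rw [mul_assoc]
  refine norm_sum_Ico_le_mul_of_blocks (L := ⌊η * N⌋₊) ⌈2 / η⌉₊ (fun a' b' ha hb hab => ?_) ?_
  · refine hshort hN hS hl hT hT1 hTη hsum (by lia) (by lia) ?_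
    have : (b' : ℝ) ≤ a' + ⌊η * N⌋₊ := by exact_mod_cast hab
    linarith [Nat.floor_le hηN]
  · have hL : η * N / 2 ≤ ⌊η * N⌋₊ := by
      have : (1 : ℝ) ≤ ⌊η * N⌋₊ := Nat.one_le_cast.2 (Nat.le_floor (by simpa using hT1.trans hTη))
      linarith [Nat.lt_floor_add_one (η * N)]
    have hNL : (N : ℝ) ≤ ⌈2 / η⌉₊ * ⌊η * N⌋₊ :=
      calc (N : ℝ) = 2 / η * (η * N / 2) := by field_simp
        _ ≤ _ := by gcongr; exact Nat.le_ceil _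
    have : N ≤ ⌈2 / η⌉₊ * ⌊η * N⌋₊ := by exact_mod_cast hNL
    lia

/-- The shift length solves `S * H ^ Q = x ^ (Q + 1 / 2)` up to rounding. -/
lemma exists_shift_length {Q : ℕ} {x S : ℝ} (hQ : 0 < Q) (hx : 1 ≤ x) (h1 : x ^ (3 / 4 : ℝ) ≤ S)
    (h2 : S ≤ x ^ ((Q + 1 : ℝ) / 2)) :
    ∃ H : ℕ, x ^ (1 / 2 : ℝ) ≤ 2 * H ∧ H ≤ x ^ (1 - 1 / (4 * Q) : ℝ) ∧
      S * H ^ Q ≤ x ^ Q * x ^ (1 / 2 : ℝ) ∧ x ^ Q * x ^ (1 / 2 : ℝ) ≤ S * (2 * H) ^ Q := by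
  have hx0 : 0 < x := by linarith
  have hS : 0 < S := lt_of_lt_of_le (by positivity) h1
  have hQ0 : (Q : ℝ) ≠ 0 := by positivity
  set H' : ℝ := x * (x ^ (1 / 2 : ℝ) / S) ^ (1 / (Q : ℝ))
  have hpow : S * H' ^ Q = x ^ Q * x ^ (1 / 2 : ℝ) := by
    rw [mul_pow, one_div (Q : ℝ), Real.rpow_inv_natCast_pow (by positivity) hQ.ne']
    field_simp
  have hroot : ∀ e : ℝ, x * (x ^ e) ^ (1 / (Q : ℝ)) = x ^ (1 + e / Q) := fun e => by
    rw [← Real.rpow_mul hx0.le, Real.rpow_add hx0, Real.rpow_one, mul_one_div]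
  have hlow : x ^ (1 / 2 : ℝ) ≤ H' := by
    have he : (1 / 2 : ℝ) = 1 + (1 / 2 - (Q + 1) / 2) / Q := by field_simp; ring
    calc x ^ (1 / 2 : ℝ) = x * (x ^ (1 / 2 - (Q + 1) / 2 : ℝ)) ^ (1 / (Q : ℝ)) := by
          rw [hroot, ← he]
      _ ≤ H' := by
          rw [Real.rpow_sub hx0]
          unfold H'
          gcongr
  have hup : H' ≤ x ^ (1 - 1 / (4 * Q) : ℝ) := by
    have he : (1 - 1 / (4 * Q) : ℝ) = 1 + (1 / 2 - 3 / 4) / Q := by field_simp; ring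
    rw [he, ← hroot, Real.rpow_sub hx0]
    unfold H'
    gcongr
  have hH1 : 1 ≤ H' := (Real.one_le_rpow hx (by norm_num)).trans hlow
  have hfloor : H' ≤ 2 * ⌊H'⌋₊ := by
    have : (1 : ℝ) ≤ ⌊H'⌋₊ := Nat.one_le_cast.2 (Nat.le_floor (by simpa using hH1))
    linarith [Nat.lt_floor_add_one H']
  have hle : (⌊H'⌋₊ : ℝ) ≤ H' := Nat.floor_le (by linarith)
  refine ⟨⌊H'⌋₊, hlow.trans hfloor, hle.trans hup, ?_, ?_⟩ <;> rw [← hpow] <;> gcongr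

lemma one_le_rpow_mul_shift_length {Q : ℕ} {x H : ℝ} (hx : 1 ≤ x) (hQ : 0 < Q)
    (hx8 : x ^ (-(1 / 8) : ℝ) ≤ (1 / 2) ^ Q) (hH : x ^ (1 / 2 : ℝ) ≤ 2 * H) :
    1 ≤ x ^ (-(1 / (8 * Q)) : ℝ) * H := by
  have hx0 : 0 < x := by linarith
  have h2 : 2 ≤ x ^ (1 / 8 : ℝ) := by
    rw [← inv_le_inv₀ (by positivity) two_pos, ← Real.rpow_neg hx0.le, ← one_div]
    exact hx8.trans (pow_le_of_le_one (by norm_num) (by norm_num) hQ.ne')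
  have hσ : (1 / (8 * Q) : ℝ) ≤ 1 / 8 := by
    gcongr
    exact le_mul_of_one_le_right (by norm_num) (Nat.one_le_cast.2 hQ)
  have : 2 ≤ x ^ (-(1 / (8 * Q)) : ℝ) * (2 * H) :=
    calc 2 ≤ x ^ (1 / 8 : ℝ) := h2
      _ ≤ x ^ (-(1 / (8 * Q)) + 1 / 2 : ℝ) := Real.rpow_le_rpow_of_exponent_le hx (by linarith)
      _ ≤ _ := by rw [Real.rpow_add hx0]; gcongr
  linarith

lemma exists_mul_prod_eq_of_shift_length {Q H : ℕ} {x S : ℝ} (hx : 1 ≤ x) (hQ : 0 < Q)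
    (hS : 0 ≤ S) (hx8 : x ^ (-(1 / 8) : ℝ) ≤ (1 / 2) ^ Q)
    (hle : S * H ^ Q ≤ x ^ Q * x ^ (1 / 2 : ℝ)) (hge : x ^ Q * x ^ (1 / 2 : ℝ) ≤ S * (2 * H) ^ Q)
    {l : List ℕ} (hl : l.length = Q)
    (hlH : ∀ h ∈ l, x ^ (-(1 / (8 * Q)) : ℝ) * H ≤ h ∧ h < H) :
    ∃ T : ℝ, S * l.prod = T * x ^ Q ∧ x ^ (1 / 4 : ℝ) ≤ T ∧ T ≤ x ^ (1 / 2 : ℝ) := by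
  have hx0 : 0 < x := by linarith
  have hup : (l.prod : ℝ) ≤ H ^ Q := by
    exact_mod_cast hl ▸ List.prod_le_pow_card l H fun h hh => (hlH h hh).2.le
  have hlow : (x ^ (-(1 / (8 * Q)) : ℝ) * H) ^ Q ≤ l.prod :=
    calc _ ≤ (⌈x ^ (-(1 / (8 * Q)) : ℝ) * H⌉₊ : ℝ) ^ Q := by gcongr; exact Nat.le_ceil _
      _ ≤ l.prod := by
        exact_mod_cast hl ▸ List.pow_card_le_prod l _ fun h hh => Nat.ceil_le.2 (hlH h hh).1
  have hσ : (x ^ (-(1 / (8 * Q)) : ℝ)) ^ Q = x ^ (-(1 / 8) : ℝ) := by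
    rw [← Real.rpow_mul_natCast hx0.le]
    congr 1
    field_simp
  refine ⟨S * l.prod / x ^ Q, by field_simp, ?_, ?_⟩
  · rw [le_div_iff₀ (by positivity)]
    calc x ^ (1 / 4 : ℝ) * x ^ Q
        = x ^ (-(1 / 8) : ℝ) * (x ^ (-(1 / 8) : ℝ) * (x ^ Q * x ^ (1 / 2 : ℝ))) := by
          rw [mul_left_comm (_ ^ (-(1 / 8) : ℝ)) (x ^ Q), mul_left_comm _ (x ^ Q),
            ← Real.rpow_add hx0, ← Real.rpow_add hx0, mul_comm]
          norm_num
      _ ≤ x ^ (-(1 / 8) : ℝ) * ((1 / 2) ^ Q * (S * (2 * H) ^ Q)) := by gcongr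
      _ = S * (x ^ (-(1 / (8 * Q)) : ℝ) * H) ^ Q := by
          rw [mul_pow, mul_pow, hσ, div_pow, one_pow]
          field_simp
      _ ≤ S * l.prod := by gcongr
  · rw [div_le_iff₀ (by positivity), mul_comm _ (x ^ Q)]
    exact (mul_le_mul_of_nonneg_left hup hS).trans hle

lemma eventually_rpow_neg_le {a ε : ℝ} (ha : 0 < a) (hε : 0 < ε) :
    ∀ᶠ N : ℕ in atTop, (N : ℝ) ^ (-a) ≤ ε :=
  ((tendsto_rpow_neg_atTop ha).comp tendsto_natCast_atTop_atTop).eventually_le_const hε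

lemma eventually_exists_shift_length {Q : ℕ} (hQ : 0 < Q) {η K : ℝ} (hη : 0 < η) (hK : 0 ≤ K) :
    ∀ᶠ N : ℕ in atTop, ∀ S : ℝ, (N : ℝ) ^ (3 / 4 : ℝ) ≤ S → S ≤ (N : ℝ) ^ ((Q + 1 : ℝ) / 2) →
      ∃ H : ℕ, 0 < H ∧ H ≤ N ∧ 1 ≤ (N : ℝ) ^ (-(1 / (8 * Q)) : ℝ) * H ∧
        ∀ l : List ℕ, l.length = Q → (∀ h ∈ l, (N : ℝ) ^ (-(1 / (8 * Q)) : ℝ) * H ≤ h ∧ h < H) →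
          (l.sum : ℝ) + K ≤ η * N ∧
            ∃ T : ℝ, S * l.prod = T * (N : ℝ) ^ Q ∧ (N : ℝ) ^ (1 / 4 : ℝ) ≤ T ∧ T ≤ η * N := by
  filter_upwards [eventually_ge_atTop 1,
    eventually_rpow_neg_le (a := 1 / (4 * Q)) (ε := η / (Q + K)) (by positivity) (by positivity),
    eventually_rpow_neg_le (a := 1 / 2) (by norm_num) hη,
    eventually_rpow_neg_le (a := 1 / 8) (ε := (1 / 2) ^ Q) (by norm_num) (by positivity)]
    with N hN hshift hhalf height S hS1 hS2
  have hx : (1 : ℝ) ≤ N := Nat.one_le_cast.2 hN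
  have hx0 : (0 : ℝ) < N := Nat.cast_pos.2 hN
  obtain ⟨H, hH1, hH2, hle, hge⟩ := exists_shift_length hQ hx hS1 hS2
  have hH : 0 < H := by
    have := (Real.one_le_rpow hx (by norm_num : (0 : ℝ) ≤ 1 / 2)).trans hH1
    exact_mod_cast (by linarith : (0 : ℝ) < H)
  have hHN : H ≤ N := by
    have : (H : ℝ) ≤ N := hH2.trans (Real.rpow_le_self_of_one_le hx (sub_le_self _ (by positivity)))
    exact_mod_cast this
  refine ⟨H, hH, hHN, one_le_rpow_mul_shift_length hx hQ height hH1, fun l hl hlH => ⟨?_, ?_⟩⟩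
  · have hsum : (l.sum : ℝ) ≤ Q * H := by
      exact_mod_cast hl ▸ List.sum_le_card_nsmul l H fun h hh => (hlH h hh).2.le
    have hH1 : (1 : ℝ) ≤ N ^ (1 - 1 / (4 * Q) : ℝ) := (Nat.one_le_cast.2 hH).trans hH2
    calc (l.sum : ℝ) + K ≤ Q * (N : ℝ) ^ (1 - 1 / (4 * Q) : ℝ) + K * N ^ (1 - 1 / (4 * Q) : ℝ) :=
          add_le_add (hsum.trans (by gcongr)) (le_mul_of_one_le_right hK hH1)
      _ = (Q + K) * N ^ (-(1 / (4 * Q)) : ℝ) * N := by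
          rw [sub_eq_neg_add, Real.rpow_add_one hx0.ne']
          ring
      _ ≤ (Q + K) * (η / (Q + K)) * N := by gcongr
      _ = η * N := by field_simp
  · obtain ⟨T, hT, hT1, hT2⟩ := exists_mul_prod_eq_of_shift_length hx hQ
      (hS1.trans' (by positivity)) height hle hge hl hlH
    refine ⟨T, hT, hT1, hT2.trans ?_⟩
    calc (N : ℝ) ^ (1 / 2 : ℝ) = (N : ℝ) ^ (-(1 / 2) : ℝ) * N := by
          rw [← Real.rpow_add_one hx0.ne']
          norm_num
      _ ≤ η * N := by gcongr

/-- Weyl differencing brings a phase of any polynomial size down to one of size between `N ^ (1/4)`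
and `N ^ (1/2)`. -/
lemma eventually_norm_sum_eC_phase_le (hc : Function.Injective c)
    (hint : ∀ i, ∀ k : ℤ, c i ≠ k) {Q : ℕ} (hQ : 0 < Q) :
    ∃ C : ℝ, 0 < C ∧ ∃ κ : ℝ, 0 < κ ∧ ∀ᶠ N : ℕ in atTop, ∀ (θ : Fin m → ℝ) (a b : ℕ),
      (N : ℝ) ^ (3 / 4 : ℝ) ≤ phaseSize c θ N → phaseSize c θ N ≤ (N : ℝ) ^ ((Q + 1 : ℝ) / 2) →
      N ≤ 2 * a → b ≤ N + 1 →
      ‖∑ n ∈ Ico a b, eC (phase c θ 0 n)‖ ≤ C * (N * (N : ℝ) ^ (-κ)) := by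
  obtain ⟨C, hC, κ, hκ, η, hη, hmain⟩ := exists_norm_sum_eC_fwdDiffs_phase_le hc hint Q
  set ω : ℝ := min (κ / 4) (1 / (8 * Q))
  have hω0 : 0 < ω := lt_min (by positivity) (by positivity)
  refine ⟨10 * (C + 1) ^ ((1 / 2 : ℝ) ^ Q), by positivity, ω * (1 / 2) ^ Q, by positivity, ?_⟩
  filter_upwards [eventually_ge_atTop 1, eventually_exists_shift_length hQ hη (K := m + 1)
    (by positivity), eventually_rpow_neg_le hω0 (ε := 1 / (C + 1)) (by positivity)]
    with N hN hshift hsmall θ a b hS1 hS2 ha hb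
  have hx : (1 : ℝ) ≤ N := Nat.one_le_cast.2 hN
  have hx0 : (0 : ℝ) < N := by linarith
  rcases le_or_gt b a with hab | hab
  · rw [Ico_eq_empty_of_le hab, sum_empty, norm_zero]
    positivity
  obtain ⟨H, hH, hHN, hσH, hl⟩ := hshift _ hS1 hS2
  have hpow : ∀ {e : ℝ}, ω ≤ e → (N : ℝ) ^ (-e) ≤ N ^ (-ω) := fun he =>
    Real.rpow_le_rpow_of_exponent_le hx (neg_le_neg he)
  refine (norm_sum_eC_le_of_fwdDiffs (X := (C + 1) * (N : ℝ) ^ (-ω)) hH hHN hσH ?_ ?_ Q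
    (by lia) fun l hlQ hlH b' hb' => ?_).trans_eq ?_
  · calc (N : ℝ) ^ (-(1 / (8 * Q)) : ℝ) ≤ N ^ (-ω) := hpow (min_le_right _ _)
      _ ≤ (C + 1) * N ^ (-ω) := le_mul_of_one_le_left (by positivity) (by linarith)
  · rwa [le_div_iff₀' (by positivity)] at hsmall
  · obtain ⟨hsum, T, hT, hT1, hT2⟩ := hl l hlQ hlH
    calc _ ≤ C * (N * T ^ (-κ)) :=
          hmain hN (hS1.trans_lt' (by positivity)) hlQ hT
            ((Real.one_le_rpow hx (by norm_num)).trans hT1) hT2 hsum ha (by lia)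
      _ ≤ C * (N * ((N : ℝ) ^ (1 / 4 : ℝ)) ^ (-κ)) := by
          gcongr C * (N * ?_)
          exact Real.rpow_le_rpow_of_nonpos (by positivity) hT1 (by linarith)
      _ = C * (N : ℝ) ^ (-(κ / 4)) * N := by
          rw [← Real.rpow_mul hx0.le]
          ring_nf
      _ ≤ (C + 1) * (N : ℝ) ^ (-ω) * N := by
          gcongr ?_ * ?_ * _
          · linarith
          · exact hpow (min_le_left _ _)
  · rw [Real.mul_rpow (by positivity) (by positivity), ← Real.rpow_mul hx0.le, neg_mul]
    ring

lemma norm_sum_Ico_eC_le_mul_rpow_neg (g : ℕ → ℝ) {N a b : ℕ} {x κ : ℝ} (hκ : 0 ≤ κ)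
    (hx : 0 < x) (hx1 : x ≤ 1) (hab : b ≤ a + N) :
    ‖∑ n ∈ Ico a b, eC (g n)‖ ≤ N * x ^ (-κ) := by
  have hN : ((Ico a b).card : ℝ) ≤ N := by
    rw [Nat.card_Ico]
    exact_mod_cast (by lia : b - a ≤ N)
  exact (norm_sum_eC_le_card _ _).trans (hN.trans (le_mul_of_one_le_right N.cast_nonneg
    (Real.one_le_rpow_of_pos_of_le_one_of_nonpos hx hx1 (neg_nonpos.2 hκ))))

lemma norm_sum_Ico_eC_le_of_le (g : ℕ → ℝ) {N N₀ a b : ℕ} {κ : ℝ} (hκ : 0 ≤ κ) (hN : 0 < N)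
    (hNN : N ≤ N₀) (hab : b ≤ a + N) :
    ‖∑ n ∈ Ico a b, eC (g n)‖ ≤ (N₀ : ℝ) ^ κ * (N * (N : ℝ) ^ (-κ)) := by
  have hN₀ : 0 < N₀ := hN.trans_le hNN
  have hle : (N : ℝ) / N₀ ≤ 1 := div_le_one_of_le₀ (Nat.cast_le.2 hNN) N₀.cast_nonneg
  refine (norm_sum_Ico_eC_le_mul_rpow_neg g hκ (by positivity) hle hab).trans_eq ?_
  rw [Real.div_rpow (by positivity) (by positivity), Real.rpow_neg N₀.cast_nonneg, div_inv_eq_mul]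
  ring

lemma eventually_phaseSize_le_rpow (c : Fin m → ℝ) : ∃ Q : ℕ, 0 < Q ∧ ∀ᶠ N : ℕ in atTop,
    ∀ θ : Fin m → ℝ, (∀ i, |θ i| ≤ 2 * N) → phaseSize c θ N ≤ (N : ℝ) ^ ((Q + 1 : ℝ) / 2) := by
  obtain ⟨A, hA⟩ := exists_nat_ge ‖c‖
  refine ⟨2 * A + 3, by lia, ?_⟩
  filter_upwards [eventually_ge_atTop 2] with N hN θ hθ
  have hx : (2 : ℝ) ≤ N := Nat.ofNat_le_cast.2 hN
  have hx0 : (0 : ℝ) < N := by linarith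
  refine (pi_norm_le_iff_of_nonneg (by positivity)).2 fun i => ?_
  have hci : c i ≤ A := (le_abs_self _).trans ((norm_le_pi_norm c i).trans hA)
  rw [norm_mul, Real.norm_eq_abs, Real.norm_of_nonneg (by positivity)]
  calc |θ i| * (N : ℝ) ^ c i ≤ N * N * (N : ℝ) ^ (A : ℝ) := by
        gcongr
        · exact (hθ i).trans (by gcongr)
        · linarith
    _ = (N : ℝ) ^ (((2 * A + 3 : ℕ) + 1 : ℝ) / 2) := by
        rw [← pow_two, ← Real.rpow_natCast _ 2, ← Real.rpow_add hx0]
        push_cast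
        ring_nf

lemma eventually_norm_sum_eC_phase_le_of_phaseSize_le (hc : Function.Injective c)
    (hint : ∀ i, ∀ k : ℤ, c i ≠ k) :
    ∃ C : ℝ, 0 < C ∧ ∃ κ : ℝ, 0 < κ ∧ ∀ᶠ N : ℕ in atTop, ∀ (θ : Fin m → ℝ) (a b : ℕ),
      1 ≤ phaseSize c θ N → phaseSize c θ N ≤ (N : ℝ) ^ (3 / 4 : ℝ) → N ≤ 2 * a → b ≤ N + 1 →
      ‖∑ n ∈ Ico a b, eC (phase c θ 0 n)‖ ≤ C * (N * phaseSize c θ N ^ (-κ)) := by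
  obtain ⟨C, hC, κ, hκ, η, hη, hmain⟩ := exists_norm_sum_eC_fwdDiffs_phase_le hc hint 0
  refine ⟨C, hC, κ, hκ, ?_⟩
  filter_upwards [eventually_gt_atTop 0, eventually_rpow_neg_le (a := 1 / 4) (by norm_num) hη,
    tendsto_natCast_atTop_atTop.eventually_ge_atTop ((m + 1) / η)]
    with N hN hη4 hNη θ a b hS1 hS ha hb
  refine hmain (l := []) hN (by linarith) rfl (by simp) hS1 ?_ ?_ ha hb
  · calc phaseSize c θ N ≤ (N : ℝ) ^ (-(1 / 4) : ℝ) * N := by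
          rw [← Real.rpow_add_one (by positivity)]
          norm_num
          exact hS
      _ ≤ η * N := by gcongr
  · rw [div_le_iff₀' hη] at hNη
    simpa using hNη

lemma exists_norm_sum_eC_phase_le (hc : Function.Injective c) (hint : ∀ i, ∀ k : ℤ, c i ≠ k) :
    ∃ C : ℝ, 0 < C ∧ ∃ κ : ℝ, 0 < κ ∧ ∀ {N : ℕ} {θ : Fin m → ℝ} {a b : ℕ}, 0 < N →
      (∀ i, |θ i| ≤ 2 * N) → 0 < phaseSize c θ N → N ≤ 2 * a → b ≤ N + 1 →
      ‖∑ n ∈ Ico a b, eC (phase c θ 0 n)‖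
        ≤ C * (N * ((N : ℝ) ^ (-κ) + phaseSize c θ N ^ (-κ))) := by
  obtain ⟨Q, hQ, hsize⟩ := eventually_phaseSize_le_rpow c
  obtain ⟨C₁, hC₁, κ₁, hκ₁, hmoderate⟩ :=
    eventually_norm_sum_eC_phase_le_of_phaseSize_le hc hint
  obtain ⟨C₂, hC₂, κ₂, hκ₂, hlarge⟩ := eventually_norm_sum_eC_phase_le hc hint hQ
  obtain ⟨N₀, hN₀⟩ := eventually_atTop.1 (hsize.and (hmoderate.and hlarge))
  set κ := min κ₁ κ₂
  have hκ : 0 < κ := lt_min hκ₁ hκ₂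
  refine ⟨C₁ + C₂ + (N₀ : ℝ) ^ κ + 1, by positivity, κ, hκ, ?_⟩
  intro N θ a b hN hθ hS ha hb
  have hx : (1 : ℝ) ≤ N := Nat.one_le_cast.2 hN
  have hpow : ∀ {x e : ℝ}, 1 ≤ x → κ ≤ e → x ^ (-e) ≤ x ^ (-κ) := fun hx he =>
    Real.rpow_le_rpow_of_exponent_le hx (neg_le_neg he)
  have hbound : ∀ {D y : ℝ}, D ≤ C₁ + C₂ + (N₀ : ℝ) ^ κ + 1 →
      y ≤ (N : ℝ) ^ (-κ) + phaseSize c θ N ^ (-κ) → 0 ≤ y → D * (N * y) ≤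
        (C₁ + C₂ + (N₀ : ℝ) ^ κ + 1) * (N * ((N : ℝ) ^ (-κ) + phaseSize c θ N ^ (-κ))) :=
    fun hD hy hy0 => by gcongr
  have hNκ : 0 < (N : ℝ) ^ (-κ) := by positivity
  have hSκ : 0 < phaseSize c θ N ^ (-κ) := by positivity
  have hN₀κ : 0 ≤ (N₀ : ℝ) ^ κ := by positivity
  rcases le_total (phaseSize c θ N) 1 with hS1 | hS1
  · refine (norm_sum_Ico_eC_le_mul_rpow_neg _ hκ.le hS hS1 (by lia : b ≤ a + N)).trans ?_
    rw [← one_mul (N * phaseSize c θ N ^ (-κ) : ℝ)]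
    exact hbound (by linarith) (by linarith) hSκ.le
  rcases Nat.lt_or_ge N N₀ with hNN | hNN
  · exact (norm_sum_Ico_eC_le_of_le _ hκ.le hN hNN.le (by lia)).trans
      (hbound (by linarith) (by linarith) hNκ.le)
  obtain ⟨hsize, hmoderate, hlarge⟩ := hN₀ N hNN
  rcases le_total (phaseSize c θ N) ((N : ℝ) ^ (3 / 4 : ℝ)) with h34 | h34
  · refine (hmoderate θ a b hS1 h34 ha hb).trans (hbound (by linarith) ?_ (by positivity))
    exact (hpow hS1 (min_le_left _ _)).trans (by linarith)
  · refine (hlarge θ a b h34 (hsize θ hθ) ha hb).trans (hbound (by linarith) ?_ (by positivity))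
    exact (hpow hx (min_le_right _ _)).trans (by linarith)

lemma mul_rpow_le_phaseSize (c θ : Fin m → ℝ) (i : Fin m) {x : ℝ} (hx : 0 ≤ x) :
    |θ i| * x ^ c i ≤ phaseSize c θ x := by
  have := norm_le_pi_norm (fun i => θ i * x ^ c i) i
  rwa [norm_mul, Real.norm_eq_abs, Real.norm_of_nonneg (by positivity)] at this

lemma exists_norm_sum_eC_phase_le_of_half_le (hc : Function.Injective c) (hpos : ∀ i, 0 < c i)
    (hint : ∀ i, ∀ k : ℤ, c i ≠ k) :
    ∃ C : ℝ, 0 < C ∧ ∃ κ : ℝ, 0 < κ ∧ ∀ {N : ℕ} {θ : Fin m → ℝ} {a b : ℕ} (i : Fin m), 0 < N →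
      (∀ i, |θ i| ≤ 2 * N) → 1 / 2 ≤ |θ i| → N ≤ 2 * a → b ≤ N + 1 →
      ‖∑ n ∈ Ico a b, eC (phase c θ 0 n)‖ ≤ C * (N * (N : ℝ) ^ (-κ)) := by
  obtain ⟨C, hC, κ, hκ, hsmooth⟩ := exists_norm_sum_eC_phase_le hc hint
  obtain ⟨c₀, hc₀, hc₀c⟩ : ∃ c₀ : ℝ, 0 < c₀ ∧ ∀ i, c₀ ≤ c i := by
    rcases isEmpty_or_nonempty (Fin m) with h | h
    · exact ⟨1, one_pos, fun i => h.elim i⟩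
    · obtain ⟨i₀, hi₀⟩ := Finite.exists_min c
      exact ⟨c i₀, hpos i₀, hi₀⟩
  refine ⟨C * (1 + 2 ^ κ), by positivity, min κ (κ * c₀), by positivity, ?_⟩
  intro N θ a b i hN hθ hhalf ha hb
  have hx : (1 : ℝ) ≤ N := Nat.one_le_cast.2 hN
  have hx0 : (0 : ℝ) < N := Nat.cast_pos.2 hN
  have hlarge : 1 / 2 * (N : ℝ) ^ c₀ ≤ phaseSize c θ N :=
    calc _ ≤ |θ i| * (N : ℝ) ^ c i := by
          gcongr
          exact hc₀c i
      _ ≤ _ := mul_rpow_le_phaseSize c θ i hx0.le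
  refine (hsmooth hN hθ (hlarge.trans_lt' (by positivity)) ha hb).trans ?_
  have hS : phaseSize c θ N ^ (-κ) ≤ 2 ^ κ * (N : ℝ) ^ (-(κ * c₀)) :=
    calc phaseSize c θ N ^ (-κ) ≤ (1 / 2 * (N : ℝ) ^ c₀) ^ (-κ) :=
          Real.rpow_le_rpow_of_nonpos (by positivity) hlarge (by linarith)
      _ = 2 ^ κ * (N : ℝ) ^ (-(κ * c₀)) := by
          rw [Real.mul_rpow (by norm_num) (by positivity), ← Real.rpow_mul hx0.le, one_div,
            Real.inv_rpow (by norm_num), Real.rpow_neg (by norm_num), inv_inv, mul_neg, mul_comm κ]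
  calc C * (N * ((N : ℝ) ^ (-κ) + phaseSize c θ N ^ (-κ)))
      ≤ C * (N * ((N : ℝ) ^ (-min κ (κ * c₀)) + 2 ^ κ * (N : ℝ) ^ (-min κ (κ * c₀)))) := by
        gcongr
        · exact min_le_left _ _
        · refine hS.trans ?_
          gcongr
          exact min_le_right _ _
    _ = _ := by ring

end Phase

/-! ### Fejér interpolation -/

lemma distT_nonneg (x : ℝ) : 0 ≤ distT x := abs_nonneg _

lemma distT_le_abs_sub_intCast (x : ℝ) (n : ℤ) : distT x ≤ |x - n| := round_le x n

lemma eC_sub_round (x : ℝ) : eC (x - round x) = eC x := by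
  rw [eC_sub, eC_intCast, map_one, mul_one]

lemma four_mul_distT_le_norm_eC_sub_one (x : ℝ) : 4 * distT x ≤ ‖eC x - 1‖ := by
  rw [← eC_sub_round x]
  exact four_mul_abs_le_norm_eC_sub_one (abs_sub_round x)

lemma distT_pos_of_abs_lt_one {x : ℝ} (h0 : x ≠ 0) (h1 : |x| < 1) : 0 < distT x := by
  refine abs_pos.2 fun h => h0 ?_
  rw [sub_eq_zero] at h
  have hround : |round x| < 1 := by
    rw [h] at h1
    exact_mod_cast h1
  rw [h, Int.abs_lt_one_iff.1 hround, Int.cast_zero]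

lemma eC_ne_one_of_abs_lt_one {x : ℝ} (h0 : x ≠ 0) (h1 : |x| < 1) : eC x ≠ 1 := by
  intro h
  have h2 := four_mul_distT_le_norm_eC_sub_one x
  rw [h, sub_self, norm_zero] at h2
  linarith [distT_pos_of_abs_lt_one h0 h1]

lemma abs_natCast_sub_lt {l l' K : ℕ} (hl : l < K) (hl' : l' < K) : |(l : ℝ) - l'| < K := by
  have h : |(l : ℤ) - l'| < K := by grind
  exact_mod_cast h

lemma one_le_abs_natCast_sub {l l' : ℕ} (h : l ≠ l') : 1 ≤ |(l : ℝ) - l'| := by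
  have hint : 1 ≤ |(l : ℤ) - l'| := Int.one_le_abs (by lia)
  exact_mod_cast hint

lemma sum_eC_sub_mul_sub_div {K l l' : ℕ} (hl : l < K) (hl' : l' < K) (x : ℝ) :
    ∑ j ∈ range K, eC (((l : ℝ) - l') * (x - j / K)) = if l = l' then (K : ℂ) else 0 := by
  have hK : (0 : ℝ) < K := by exact_mod_cast hl.pos
  split_ifs with h
  · simp [h, eC_zero]
  set r : ℝ := ((l' : ℝ) - l) / K with hr
  have hr1 : eC r ≠ 1 := by
    refine eC_ne_one_of_abs_lt_one (div_ne_zero (sub_ne_zero.2 ?_) hK.ne') ?_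
    · exact_mod_cast Ne.symm h
    · rw [abs_div, Nat.abs_cast, div_lt_one hK]
      exact abs_natCast_sub_lt hl' hl
  have hgeom : ∀ j : ℕ, eC (((l : ℝ) - l') * (x - j / K)) = eC (((l : ℝ) - l') * x) * eC r ^ j := by
    intro j
    rw [← eC_nat_mul, ← eC_add]
    congr 1
    rw [hr]
    ring
  have hroot : eC r ^ K = 1 := by
    rw [← eC_nat_mul, hr, mul_div_cancel₀ _ hK.ne']
    exact_mod_cast eC_intCast ((l' : ℤ) - l)
  simp only [hgeom]
  rw [← mul_sum, geom_sum_eq hr1, hroot, sub_self, zero_div, mul_zero]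

/-- The Fejér kernel on `ℝ/ℤ`, normalised so that its value at `0` is `1`. Its translates by the
`K`-th parts of the period are a partition of unity. -/
def fejer (K : ℕ) (y : ℝ) : ℝ := ‖∑ l ∈ range K, eC (l * y)‖ ^ 2 / (K : ℝ) ^ 2

lemma fejer_nonneg (K : ℕ) (y : ℝ) : 0 ≤ fejer K y := by
  unfold fejer
  positivity

lemma fejer_eq_sum_eC (K : ℕ) (y : ℝ) : (fejer K y : ℂ) =
    1 / (K : ℂ) ^ 2 * ∑ q ∈ range K ×ˢ range K, eC (((q.1 : ℝ) - q.2) * y) := by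
  have hprod : ∀ q : ℕ × ℕ, eC (((q.1 : ℝ) - q.2) * y) =
      eC (q.1 * y) * (starRingEnd ℂ) (eC (q.2 * y)) := fun q => by rw [sub_mul, eC_sub]
  simp only [hprod, sum_product]
  rw [← sum_mul_sum, ← map_sum, Complex.mul_conj', fejer]
  push_cast
  ring

lemma sum_fejer_sub_div {K : ℕ} (hK : 0 < K) (x : ℝ) :
    ∑ j ∈ range K, fejer K (x - j / K) = 1 := by
  have hK' : (K : ℂ) ≠ 0 := by exact_mod_cast hK.ne'
  have h : ((∑ j ∈ range K, fejer K (x - j / K) : ℝ) : ℂ) = 1 := by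
    push_cast
    simp only [fejer_eq_sum_eC]
    rw [← mul_sum, sum_comm, sum_congr rfl fun q hq => sum_eC_sub_mul_sub_div
      (mem_range.1 (mem_product.1 hq).1) (mem_range.1 (mem_product.1 hq).2) x, sum_product]
    simp only [sum_ite_eq, ← sum_filter, filter_mem_eq_inter, inter_self, sum_const, card_range,
      nsmul_eq_mul]
    field_simp
  exact_mod_cast h

lemma fejer_le_of_le_distT (K : ℕ) {y δ : ℝ} (hδ : 0 < δ) (hy : δ ≤ distT y) :
    fejer K y ≤ 1 / (4 * (K : ℝ) ^ 2 * δ ^ 2) := by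
  set u := ‖∑ l ∈ range K, eC (l * y)‖ with hu
  have hgeom : u * ‖eC y - 1‖ ≤ 2 := by
    simp only [hu, eC_nat_mul]
    rw [← norm_mul, geom_sum_mul, ← eC_nat_mul]
    refine (norm_sub_le _ _).trans ?_
    rw [norm_eC, norm_one]
    norm_num
  have hu1 : u ≤ 1 / (2 * δ) := by
    rw [le_div_iff₀ (by positivity)]
    have hfour := four_mul_distT_le_norm_eC_sub_one y
    have hmul : u * (4 * δ) ≤ u * ‖eC y - 1‖ := by gcongr; linarith
    linarith
  calc fejer K y = u ^ 2 / (K : ℝ) ^ 2 := rfl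
    _ ≤ (1 / (2 * δ)) ^ 2 / (K : ℝ) ^ 2 := by gcongr
    _ = _ := by rw [div_pow, div_div]; ring_nf

lemma half_le_re_eC {x : ℝ} (hx : |x| ≤ 1 / 8) : 1 / 2 ≤ (eC x).re := by
  have hre : (eC x).re = Real.cos (2 * Real.pi * x) := by
    rw [eC, show 2 * Real.pi * Complex.I * (x : ℂ) = ((2 * Real.pi * x : ℝ) : ℂ) * Complex.I by
      push_cast; ring, Complex.exp_ofReal_mul_I_re]
  have habs : |2 * Real.pi * x| ≤ 1 := by
    rw [abs_mul, abs_of_pos Real.two_pi_pos]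
    nlinarith [Real.pi_lt_four, Real.pi_pos]
  rw [hre]
  linarith [Real.one_sub_sq_div_two_le_cos (x := 2 * Real.pi * x),
    (sq_le_one_iff_abs_le_one _).2 habs]

lemma quarter_le_fejer_of_distT_le {K : ℕ} (hK : 0 < K) {x : ℝ} (hx : distT x ≤ 1 / (8 * K)) :
    1 / 4 ≤ fejer K x := by
  have hK' : (0 : ℝ) < K := by exact_mod_cast hK
  have hre : ∀ l ∈ range K, 1 / 2 ≤ (eC (l * x)).re := by
    intro l hl
    have hlK : (l : ℝ) ≤ K := by exact_mod_cast (mem_range.1 hl).le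
    rw [eC_nat_mul, ← eC_sub_round, ← eC_nat_mul]
    refine half_le_re_eC ?_
    calc |(l : ℝ) * (x - round x)| = l * distT x := by rw [abs_mul, Nat.abs_cast, distT]
      _ ≤ K * (1 / (8 * K)) := mul_le_mul hlK hx (distT_nonneg x) hK'.le
      _ = 1 / 8 := by field_simp
  have hnorm : (K : ℝ) / 2 ≤ ‖∑ l ∈ range K, eC (l * x)‖ := by
    have hsum := card_nsmul_le_sum (range K) _ _ hre
    rw [card_range, nsmul_eq_mul, ← Complex.re_sum] at hsum
    linarith [Complex.re_le_norm (∑ l ∈ range K, eC (l * x))]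
  rw [fejer, le_div_iff₀ (by positivity)]
  calc 1 / 4 * (K : ℝ) ^ 2 = (K / 2 : ℝ) ^ 2 := by ring
    _ ≤ _ := by gcongr

/-- The interpolation of a `1`-periodic `φ` from its values at the `K`-th parts of the period,
a trigonometric polynomial of degree less than `K`. -/
def fejerInterp (φ : ℝ → ℂ) (K : ℕ) (x : ℝ) : ℂ :=
  ∑ j ∈ range K, φ (j / K) * fejer K (x - j / K)

/-- The coefficients of `fejerInterp φ K`; the pairs `q` with the same `q.1 - q.2` all belong to
that frequency. -/
def fejerCoeff (φ : ℝ → ℂ) (K : ℕ) (q : ℕ × ℕ) : ℂ :=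
  1 / (K : ℂ) ^ 2 * ∑ j ∈ range K, φ (j / K) * eC (-(((q.1 : ℝ) - q.2) * (j / K)))

lemma fejerInterp_eq_sum_eC (φ : ℝ → ℂ) (K : ℕ) (x : ℝ) : fejerInterp φ K x =
    ∑ q ∈ range K ×ˢ range K, fejerCoeff φ K q * eC (((q.1 : ℝ) - q.2) * x) := by
  simp only [fejerInterp, fejerCoeff, fejer_eq_sum_eC, mul_sum, sum_mul]
  rw [sum_comm]
  refine sum_congr rfl fun q _ => sum_congr rfl fun j _ => ?_
  rw [mul_sub, sub_eq_add_neg, eC_add]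
  ring

lemma norm_fejerInterp_le_one {φ : ℝ → ℂ} (hφ : ∀ x, ‖φ x‖ ≤ 1) {K : ℕ} (hK : 0 < K) (x : ℝ) :
    ‖fejerInterp φ K x‖ ≤ 1 := by
  rw [← sum_fejer_sub_div hK x]
  refine norm_sum_le_of_le _ fun j _ => ?_
  rw [norm_mul, Complex.norm_real, Real.norm_of_nonneg (fejer_nonneg _ _)]
  exact mul_le_of_le_one_left (fejer_nonneg _ _) (hφ _)

lemma norm_fejerCoeff_le {φ : ℝ → ℂ} (hφ : ∀ x, ‖φ x‖ ≤ 1) (K : ℕ) (q : ℕ × ℕ) :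
    ‖fejerCoeff φ K q‖ ≤ 1 / K := by
  have hterm : ∀ j ∈ range K, ‖φ (j / K) * eC (-(((q.1 : ℝ) - q.2) * (j / K)))‖ ≤ 1 := by
    intro j _
    rw [norm_mul, norm_eC, mul_one]
    exact hφ _
  have hsum := norm_sum_le_of_le _ hterm
  rw [sum_const, card_range, nsmul_eq_mul, mul_one] at hsum
  calc ‖fejerCoeff φ K q‖ ≤ 1 / (K : ℝ) ^ 2 * K := by
        rw [fejerCoeff, norm_mul, norm_div, norm_one, norm_pow, Complex.norm_natCast]
        gcongr
    _ = 1 / K := by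
        rcases eq_or_ne (K : ℝ) 0 with h | h
        · simp [h]
        · field_simp

lemma norm_sub_fejerInterp_le {φ : ℝ → ℂ} (hφ : ∀ x, ‖φ x‖ ≤ 1) {K : ℕ} (hK : 0 < K)
    {x δ L : ℝ} (hδ : 0 < δ) (hL : 0 ≤ L)
    (hnear : ∀ j < K, distT (x - j / K) < δ → ‖φ x - φ (j / K)‖ ≤ L) :
    ‖φ x - fejerInterp φ K x‖ ≤ L + 1 / (2 * K * δ ^ 2) := by
  have hsplit : φ x - fejerInterp φ K x =
      ∑ j ∈ range K, (φ x - φ (j / K)) * fejer K (x - j / K) := by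
    simp only [sub_mul, sum_sub_distrib]
    rw [← mul_sum, ← Complex.ofReal_sum, sum_fejer_sub_div hK, Complex.ofReal_one, mul_one,
      fejerInterp]
  have hterm : ∀ j ∈ range K, ‖(φ x - φ (j / K)) * fejer K (x - j / K)‖ ≤
      L * fejer K (x - j / K) + 2 * (1 / (4 * (K : ℝ) ^ 2 * δ ^ 2)) := by
    intro j hj
    have hF := fejer_nonneg K (x - j / K)
    rw [norm_mul, Complex.norm_real, Real.norm_of_nonneg hF]
    rcases lt_or_ge (distT (x - j / K)) δ with h | h
    · exact le_add_of_le_of_nonneg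
        (mul_le_mul_of_nonneg_right (hnear j (mem_range.1 hj) h) hF) (by positivity)
    · refine le_add_of_nonneg_of_le (by positivity)
        (mul_le_mul ?_ (fejer_le_of_le_distT K hδ h) hF zero_le_two)
      linarith [norm_sub_le (φ x) (φ (j / K)), hφ x, hφ (j / K)]
  rw [hsplit]
  refine (norm_sum_le_of_le _ hterm).trans (le_of_eq ?_)
  have hK' : (K : ℝ) ≠ 0 := by exact_mod_cast hK.ne'
  rw [sum_add_distrib, ← mul_sum, sum_fejer_sub_div hK, sum_const, card_range, nsmul_eq_mul,
    mul_one]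
  field_simp
  ring

/-- The `1`-periodic factor `e(-ξ {x})` that turns `e(ξ x)` into `e(ξ ⌊x⌋)`. -/
def fracPhase (ξ x : ℝ) : ℂ := eC (-(ξ * Int.fract x))

lemma norm_fracPhase (ξ x : ℝ) : ‖fracPhase ξ x‖ = 1 := norm_eC _

lemma distT_le_fract (x : ℝ) : distT x ≤ Int.fract x := by
  rw [← abs_of_nonneg (Int.fract_nonneg x)]
  exact distT_le_abs_sub_intCast x ⌊x⌋

lemma distT_le_one_sub_fract (x : ℝ) : distT x ≤ 1 - Int.fract x := by
  have h := distT_le_abs_sub_intCast x (⌊x⌋ + 1)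
  rw [abs_sub_comm, abs_of_pos (by push_cast; linarith [Int.lt_floor_add_one x])] at h
  push_cast at h
  linarith [Int.self_sub_floor x]

/-- The phase jumps only at the integers, so that it is Lipschitz between points of `ℝ/ℤ` that no
integer separates. -/
lemma norm_fracPhase_sub_le {ξ x y δ : ℝ} (hξ : |ξ| ≤ 1 / 2) (hx : δ ≤ distT x)
    (hy : y ∈ Set.Ico (0 : ℝ) 1) (hxy : distT (x - y) < δ) :
    ‖fracPhase ξ x - fracPhase ξ y‖ ≤ Real.pi * δ := by
  have hfloor : round (x - y) = ⌊x⌋ := by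
    obtain ⟨h1, h2⟩ := abs_lt.1 hxy
    have h3 := distT_le_fract x
    have h4 := distT_le_one_sub_fract x
    have h5 := Int.self_sub_floor x
    have hlt : (round (x - y) : ℝ) < ⌊x⌋ + 1 := by linarith [hy.1]
    have hgt : (⌊x⌋ : ℝ) - 1 < round (x - y) := by linarith [hy.2]
    have hlt' : round (x - y) < ⌊x⌋ + 1 := by exact_mod_cast hlt
    have hgt' : ⌊x⌋ - 1 < round (x - y) := by exact_mod_cast hgt
    lia
  have hdist : |Int.fract x - y| ≤ δ := by
    rw [distT, hfloor, sub_right_comm, Int.self_sub_floor] at hxy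
    exact hxy.le
  calc ‖fracPhase ξ x - fracPhase ξ y‖
      ≤ 2 * Real.pi * |-(ξ * Int.fract x) - -(ξ * Int.fract y)| := norm_eC_sub_le _ _
    _ = 2 * Real.pi * (|ξ| * |Int.fract x - y|) := by
        rw [Int.fract_eq_self.2 hy, ← abs_mul, ← abs_neg (ξ * _)]
        ring_nf
    _ ≤ 2 * Real.pi * (1 / 2 * δ) := by gcongr
    _ = Real.pi * δ := by ring

lemma norm_fracPhase_sub_fejerInterp_le {ξ : ℝ} (hξ : |ξ| ≤ 1 / 2) {K : ℕ} (hK : 0 < K)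
    {x δ : ℝ} (hδ : 0 < δ) (hx : δ ≤ distT x) :
    ‖fracPhase ξ x - fejerInterp (fracPhase ξ) K x‖ ≤ Real.pi * δ + 1 / (2 * K * δ ^ 2) := by
  refine norm_sub_fejerInterp_le (fun y => (norm_fracPhase ξ y).le) hK hδ (by positivity)
    fun j hj hnear => norm_fracPhase_sub_le hξ hx ⟨by positivity, ?_⟩ hnear
  rw [div_lt_one (by exact_mod_cast hK)]
  exact_mod_cast hj

/-- The kernel `fejer M` majorises the neighbourhood of the integers where the interpolation of
`fracPhase ξ` fails. -/
lemma norm_fracPhase_sub_fejerInterp_pow_three_le {ξ : ℝ} (hξ : |ξ| ≤ 1 / 2) {M : ℕ}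
    (hM : 0 < M) (x : ℝ) :
    ‖fracPhase ξ x - fejerInterp (fracPhase ξ) (M ^ 3) x‖ ≤ 33 / M + 8 * fejer M x := by
  have hK : 0 < M ^ 3 := pow_pos hM 3
  rcases le_or_gt (distT x) (1 / (8 * M)) with h | h
  · have hfejer := quarter_le_fejer_of_distT_le hM h
    have htwo := norm_sub_le (fracPhase ξ x) (fejerInterp (fracPhase ξ) (M ^ 3) x)
    have hinterp := norm_fejerInterp_le_one (fun y => (norm_fracPhase ξ y).le) hK x
    rw [norm_fracPhase] at htwo
    have hpos : 0 ≤ 33 / (M : ℝ) := by positivity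
    linarith
  · refine le_add_of_le_of_nonneg
      ((norm_fracPhase_sub_fejerInterp_le hξ hK (by positivity) h.le).trans ?_)
      (mul_nonneg (by norm_num) (fejer_nonneg M x))
    calc Real.pi * (1 / (8 * M)) + 1 / (2 * ((M ^ 3 : ℕ) : ℝ) * (1 / (8 * M)) ^ 2)
        = (Real.pi / 8 + 32) / M := by
          push_cast
          field_simp
          ring
      _ ≤ 33 / M := by
          gcongr
          linarith [Real.pi_lt_four]

lemma sum_fejer_le {α : Type*} (s : Finset α) {M : ℕ} (hM : 0 < M) (y : α → ℝ) {E : ℝ}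
    (hE : 0 ≤ E) (h : ∀ l l' : ℕ, l < M → l' < M → l ≠ l' →
      ‖∑ n ∈ s, eC (((l : ℝ) - l') * y n)‖ ≤ E) :
    ∑ n ∈ s, fejer M (y n) ≤ #s / M + E := by
  have hM' : (M : ℝ) ≠ 0 := by exact_mod_cast hM.ne'
  have hexpand : ((∑ n ∈ s, fejer M (y n) : ℝ) : ℂ) = 1 / (M : ℂ) ^ 2 *
      ∑ q ∈ range M ×ˢ range M, ∑ n ∈ s, eC (((q.1 : ℝ) - q.2) * y n) := by
    push_cast
    simp only [fejer_eq_sum_eC]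
    rw [← mul_sum, sum_comm]
  have hterm : ∀ q ∈ range M ×ˢ range M, ‖∑ n ∈ s, eC (((q.1 : ℝ) - q.2) * y n)‖ ≤
      (if q.1 = q.2 then (#s : ℝ) else 0) + E := by
    intro q hq
    obtain ⟨h1, h2⟩ := mem_product.1 hq
    split_ifs with hdiag
    · exact le_add_of_le_of_nonneg (norm_sum_eC_le_card s _) hE
    · rw [zero_add]
      exact h q.1 q.2 (mem_range.1 h1) (mem_range.1 h2) hdiag
  calc ∑ n ∈ s, fejer M (y n) = ‖((∑ n ∈ s, fejer M (y n) : ℝ) : ℂ)‖ := by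
        rw [Complex.norm_real, Real.norm_of_nonneg (sum_nonneg fun n _ => fejer_nonneg _ _)]
    _ ≤ 1 / (M : ℝ) ^ 2 *
        ∑ q ∈ range M ×ˢ range M, ((if q.1 = q.2 then (#s : ℝ) else 0) + E) := by
        rw [hexpand, norm_mul, norm_div, norm_one, norm_pow, Complex.norm_natCast]
        gcongr
        exact norm_sum_le_of_le _ hterm
    _ = #s / M + E := by
        rw [sum_add_distrib, sum_product]
        simp only [sum_ite_eq, ← sum_filter, filter_mem_eq_inter, inter_self, sum_const,
          card_product, card_range, nsmul_eq_mul]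
        push_cast
        field_simp

/-! ### Exponential sums with integer parts -/

lemma norm_prod_sub_prod_le_sum {ι R : Type*} [NormedCommRing R] [NormOneClass R] (s : Finset ι)
    {f g : ι → R} (hf : ∀ i ∈ s, ‖f i‖ ≤ 1) (hg : ∀ i ∈ s, ‖g i‖ ≤ 1) :
    ‖∏ i ∈ s, f i - ∏ i ∈ s, g i‖ ≤ ∑ i ∈ s, ‖f i - g i‖ := by
  classical
  induction s using Finset.induction_on with
  | empty => simp
  | insert a s ha ih =>
    simp only [forall_mem_insert] at hf hg
    have hprod : ‖∏ i ∈ s, f i‖ ≤ 1 :=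
      (norm_prod_le s f).trans (prod_le_one (fun i _ => norm_nonneg _) hf.2)
    rw [prod_insert ha, prod_insert ha, sum_insert ha]
    calc ‖f a * ∏ i ∈ s, f i - g a * ∏ i ∈ s, g i‖
        = ‖(f a - g a) * ∏ i ∈ s, f i + g a * (∏ i ∈ s, f i - ∏ i ∈ s, g i)‖ := by
          congr 1
          ring
      _ ≤ ‖f a - g a‖ * ‖∏ i ∈ s, f i‖ + ‖g a‖ * ‖∏ i ∈ s, f i - ∏ i ∈ s, g i‖ :=
          norm_add_le_of_le (norm_mul_le _ _) (norm_mul_le _ _)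
      _ ≤ ‖f a - g a‖ * 1 + 1 * ∑ i ∈ s, ‖f i - g i‖ := by
          gcongr
          · exact hg.1
          · exact ih hf.2 hg.2
      _ = _ := by rw [mul_one, one_mul]

section Floor

variable {ι α : Type*} [Fintype ι]

lemma eC_sum_mul_floor (ξ y : ι → ℝ) :
    eC (∑ i, ξ i * (⌊y i⌋ : ℝ)) = ∏ i, eC (ξ i * y i) * fracPhase (ξ i) (y i) := by
  rw [eC_sum]
  refine prod_congr rfl fun i _ => ?_
  rw [fracPhase, ← eC_add, ← Int.self_sub_fract]
  congr 1
  ring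

lemma norm_eC_sum_mul_floor_sub_le {ξ : ι → ℝ} (hξ : ∀ i, |ξ i| ≤ 1 / 2) (y : ι → ℝ) {M : ℕ}
    (hM : 0 < M) :
    ‖eC (∑ i, ξ i * (⌊y i⌋ : ℝ)) -
      ∏ i, eC (ξ i * y i) * fejerInterp (fracPhase (ξ i)) (M ^ 3) (y i)‖ ≤
      ∑ i, (33 / (M : ℝ) + 8 * fejer M (y i)) := by
  rw [eC_sum_mul_floor]
  refine (norm_prod_sub_prod_le_sum _ (fun i _ => ?_) (fun i _ => ?_)).trans
    (sum_le_sum fun i _ => ?_)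
  · rw [norm_mul, norm_eC, norm_fracPhase, one_mul]
  · rw [norm_mul, norm_eC, one_mul]
    exact norm_fejerInterp_le_one (fun x => (norm_fracPhase _ x).le) (pow_pos hM 3) _
  · rw [← mul_sub, norm_mul, norm_eC, one_mul]
    exact norm_fracPhase_sub_fejerInterp_pow_three_le (hξ i) hM _

lemma norm_sum_eC_floor_sub_le (s : Finset α) {ξ : ι → ℝ} (hξ : ∀ i, |ξ i| ≤ 1 / 2)
    (y : α → ι → ℝ) {M : ℕ} (hM : 0 < M) {F : ℝ} (hF : ∀ i, ∑ n ∈ s, fejer M (y n i) ≤ F) :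
    ‖∑ n ∈ s, eC (∑ i, ξ i * (⌊y n i⌋ : ℝ)) -
      ∑ n ∈ s, ∏ i, eC (ξ i * y n i) * fejerInterp (fracPhase (ξ i)) (M ^ 3) (y n i)‖ ≤
      Fintype.card ι * (33 * (#s / M) + 8 * F) := by
  rw [← sum_sub_distrib]
  refine (norm_sum_le_of_le _ fun n _ => norm_eC_sum_mul_floor_sub_le hξ (y n) hM).trans ?_
  rw [sum_comm]
  refine (sum_le_card_nsmul _ _ (33 * (#s / M) + 8 * F) fun i _ => ?_).trans
    (by rw [card_univ, nsmul_eq_mul])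
  rw [sum_add_distrib, ← mul_sum, sum_const, nsmul_eq_mul]
  linarith [hF i, mul_div_left_comm (33 : ℝ) (#s) M]

lemma sum_prod_eC_mul_fejerInterp [DecidableEq ι] (s : Finset α) (φ : ι → ℝ → ℂ) (K : ℕ)
    (ξ : ι → ℝ) (y : α → ι → ℝ) :
    ∑ n ∈ s, ∏ i, eC (ξ i * y n i) * fejerInterp (φ i) K (y n i) =
      ∑ p ∈ Fintype.piFinset fun _ : ι => range K ×ˢ range K, (∏ i, fejerCoeff (φ i) K (p i)) *
        ∑ n ∈ s, eC (∑ i, (ξ i + ((p i).1 - (p i).2)) * y n i) := by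
  simp only [mul_sum]
  rw [sum_comm]
  refine sum_congr rfl fun n _ => ?_
  simp only [fejerInterp_eq_sum_eC, mul_sum]
  rw [prod_univ_sum]
  refine sum_congr rfl fun p _ => ?_
  rw [eC_sum, ← prod_mul_distrib]
  refine prod_congr rfl fun i _ => ?_
  rw [add_mul, eC_add]
  ring

lemma sum_piFinset_prod_ite_eq [DecidableEq ι] {K : ℕ} (hK : 0 < K) :
    ∑ p ∈ Fintype.piFinset fun _ : ι => range K ×ˢ range K,
      ∏ i, (if (p i).1 = (p i).2 then 1 / (K : ℝ) else 0) = 1 := by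
  have hdiag : ∑ q ∈ range K ×ˢ range K, (if q.1 = q.2 then 1 / (K : ℝ) else 0) = 1 := by
    rw [sum_product]
    simp only [sum_ite_eq, ← sum_filter, filter_mem_eq_inter, inter_self, sum_const, card_range,
      nsmul_eq_mul]
    field_simp
  rw [← prod_univ_sum (fun _ : ι => range K ×ˢ range K)
    fun _ q => if q.1 = q.2 then 1 / (K : ℝ) else 0]
  simp only [hdiag, prod_const_one]

lemma norm_prod_fejerCoeff_mul_sum_le (s : Finset α) {φ : ι → ℝ → ℂ} (hφ : ∀ i x, ‖φ i x‖ ≤ 1)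
    {K : ℕ} (hK : 0 < K) {ξ : ι → ℝ} {y : α → ι → ℝ} {E : ℝ} (hE : 0 ≤ E) (p : ι → ℕ × ℕ)
    (h : (∃ i, (p i).1 ≠ (p i).2) →
      ‖∑ n ∈ s, eC (∑ i, (ξ i + ((p i).1 - (p i).2)) * y n i)‖ ≤ E) :
    ‖(∏ i, fejerCoeff (φ i) K (p i)) *
      ∑ n ∈ s, eC (∑ i, (ξ i + ((p i).1 - (p i).2)) * y n i)‖ ≤
      ‖∑ n ∈ s, eC (∑ i, ξ i * y n i)‖ *
        (∏ i, if (p i).1 = (p i).2 then 1 / (K : ℝ) else 0) + E := by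
  have hcoeff : ‖∏ i, fejerCoeff (φ i) K (p i)‖ ≤ ∏ _i : ι, 1 / (K : ℝ) := by
    rw [norm_prod]
    exact prod_le_prod (fun i _ => norm_nonneg _) fun i _ => norm_fejerCoeff_le (hφ i) K _
  rw [norm_mul]
  by_cases hne : ∃ i, (p i).1 ≠ (p i).2
  · have hcoeff' : ‖∏ i, fejerCoeff (φ i) K (p i)‖ ≤ 1 := hcoeff.trans <|
      prod_le_one (fun i _ => by positivity) fun i _ => div_le_one_of_le₀ (by exact_mod_cast hK)
        (by positivity)
    refine le_add_of_nonneg_of_le (mul_nonneg (norm_nonneg _) (prod_nonneg fun i _ => ?_)) ?_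
    · split_ifs <;> positivity
    · exact (mul_le_mul hcoeff' (h hne) (norm_nonneg _) zero_le_one).trans_eq (one_mul E)
  · push Not at hne
    refine le_add_of_le_of_nonneg ?_ hE
    simp only [hne, sub_self, add_zero, if_true]
    rw [mul_comm]
    gcongr

lemma norm_sum_prod_eC_mul_fejerInterp_le (s : Finset α) {φ : ι → ℝ → ℂ}
    (hφ : ∀ i x, ‖φ i x‖ ≤ 1) {K : ℕ} (hK : 0 < K) (ξ : ι → ℝ) (y : α → ι → ℝ) {E : ℝ}
    (hE : 0 ≤ E)
    (h : ∀ p : ι → ℕ × ℕ, (∀ i, (p i).1 < K ∧ (p i).2 < K) → (∃ i, (p i).1 ≠ (p i).2) →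
      ‖∑ n ∈ s, eC (∑ i, (ξ i + ((p i).1 - (p i).2)) * y n i)‖ ≤ E) :
    ‖∑ n ∈ s, ∏ i, eC (ξ i * y n i) * fejerInterp (φ i) K (y n i)‖ ≤
      ‖∑ n ∈ s, eC (∑ i, ξ i * y n i)‖ + ((K : ℝ) * K) ^ Fintype.card ι * E := by
  classical
  rw [sum_prod_eC_mul_fejerInterp]
  refine (norm_sum_le_of_le _ fun p hp =>
    norm_prod_fejerCoeff_mul_sum_le s hφ hK hE p (h p fun i => ?_)).trans (le_of_eq ?_)
  · simpa only [mem_product, mem_range] using Fintype.mem_piFinset.1 hp i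
  · rw [sum_add_distrib, ← mul_sum, sum_piFinset_prod_ite_eq hK, mul_one, sum_const,
      Fintype.card_piFinset, nsmul_eq_mul]
    simp only [card_product, card_range, prod_const, card_univ, Nat.cast_pow, Nat.cast_mul]

lemma sum_fejer_le_of_norm_sum_eC_le (s : Finset α) (y : α → ι → ℝ) {M : ℕ} (hM : 0 < M) {E : ℝ}
    (hE : 0 ≤ E) (h : ∀ η : ι → ℝ, (∀ i, |η i| ≤ M) → (∃ i, 1 ≤ |η i|) →
      ‖∑ n ∈ s, eC (∑ i, η i * y n i)‖ ≤ E) (i : ι) :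
    ∑ n ∈ s, fejer M (y n i) ≤ #s / M + E := by
  classical
  refine sum_fejer_le s hM (fun n => y n i) hE fun l l' hl hl' hne => ?_
  have hsingle := h (Pi.single i ((l : ℝ) - l')) (fun j => ?_) ⟨i, ?_⟩
  · simpa only [Pi.single_apply, ite_mul, zero_mul, sum_ite_eq', mem_univ, if_true] using hsingle
  · rcases eq_or_ne j i with rfl | hj
    · rw [Pi.single_eq_same]
      exact (abs_natCast_sub_lt hl hl').le
    · rw [Pi.single_eq_of_ne hj, abs_zero]
      positivity
  · rw [Pi.single_eq_same]
    exact one_le_abs_natCast_sub hne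

lemma norm_sum_eC_floor_le (s : Finset α) {ξ : ι → ℝ} (hξ : ∀ i, |ξ i| ≤ 1 / 2)
    (y : α → ι → ℝ) {M : ℕ} (hM : 0 < M) {E : ℝ} (hE : 0 ≤ E)
    (h : ∀ η : ι → ℝ, (∀ i, |η i| ≤ 2 * (M : ℝ) ^ 3) → (∃ i, 1 / 2 ≤ |η i|) →
      ‖∑ n ∈ s, eC (∑ i, η i * y n i)‖ ≤ E) :
    ‖∑ n ∈ s, eC (∑ i, ξ i * (⌊y n i⌋ : ℝ))‖ ≤ ‖∑ n ∈ s, eC (∑ i, ξ i * y n i)‖ +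
      Fintype.card ι * (41 * (#s / M) + 8 * E) + (M : ℝ) ^ (6 * Fintype.card ι) * E := by
  have hM1 : (1 : ℝ) ≤ M := by exact_mod_cast hM
  have hM3 : (M : ℝ) ≤ (M : ℝ) ^ 3 := le_self_pow₀ hM1 (by norm_num)
  have hfejer : ∀ i, ∑ n ∈ s, fejer M (y n i) ≤ #s / M + E :=
    sum_fejer_le_of_norm_sum_eC_le s y hM hE fun η hη ⟨i, hi⟩ =>
      h η (fun j => by linarith [hη j]) ⟨i, by linarith⟩
  have hinterp := norm_sum_prod_eC_mul_fejerInterp_le s (fun i x => (norm_fracPhase (ξ i) x).le)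
    (pow_pos hM 3) ξ y hE fun p hp ⟨i, hi⟩ => h _ (fun j => ?_) ⟨i, ?_⟩
  · have hpow : (((M ^ 3 : ℕ) : ℝ) * (M ^ 3 : ℕ)) ^ Fintype.card ι =
        (M : ℝ) ^ (6 * Fintype.card ι) := by
      push_cast
      ring
    rw [hpow] at hinterp
    have hdiff := norm_sum_eC_floor_sub_le s hξ y hM hfejer
    have htri := norm_le_norm_sub_add (∑ n ∈ s, eC (∑ i, ξ i * (⌊y n i⌋ : ℝ)))
      (∑ n ∈ s, ∏ i, eC (ξ i * y n i) * fejerInterp (fracPhase (ξ i)) (M ^ 3) (y n i))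
    linarith
  · have hdiff := abs_natCast_sub_lt (hp j).1 (hp j).2
    push_cast at hdiff
    linarith [abs_add_le (ξ j) (((p j).1 : ℝ) - (p j).2), hξ j]
  · have hone := one_le_abs_natCast_sub hi
    have htri := abs_sub_abs_le_abs_sub (((p i).1 : ℝ) - (p i).2) (-ξ i)
    rw [abs_neg, sub_neg_eq_add, add_comm (_ - _)] at htri
    linarith [hξ i]

end Floor

lemma exists_nat_le_rpow_and_inv_le {x ε : ℝ} (hx : 1 ≤ x) (hε : 0 ≤ ε) :
    ∃ M : ℕ, 0 < M ∧ (M : ℝ) ≤ x ^ ε ∧ 1 / (M : ℝ) ≤ 2 * x ^ (-ε) := by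
  have hone : 1 ≤ x ^ ε := Real.one_le_rpow hx hε
  have hM : 0 < ⌊x ^ ε⌋₊ := Nat.floor_pos.2 hone
  refine ⟨⌊x ^ ε⌋₊, hM, Nat.floor_le (by linarith), ?_⟩
  have hM1 : (1 : ℝ) ≤ ⌊x ^ ε⌋₊ := by exact_mod_cast hM
  rw [Real.rpow_neg (by linarith), ← div_eq_mul_inv, div_le_div_iff₀ (by linarith) (by linarith)]
  linarith [Nat.lt_floor_add_one (x ^ ε)]

lemma pow_le_rpow_mul {u x ε : ℝ} (hu : 0 ≤ u) (hx : 0 ≤ x) (h : u ≤ x ^ ε) (n : ℕ) :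
    u ^ n ≤ x ^ (ε * n) := by
  rw [Real.rpow_mul_natCast hx]
  gcongr

lemma exists_interpolation_length {x ε κ : ℝ} {m : ℕ} (hx : 1 ≤ x) (hε : 0 ≤ ε) (hε3 : 3 * ε ≤ 1)
    (hεκ : (6 * m + 1) * ε ≤ κ) :
    ∃ M : ℕ, 0 < M ∧ (M : ℝ) ^ 3 ≤ x ∧ 1 / (M : ℝ) ≤ 2 * x ^ (-ε) ∧
      (M : ℝ) ^ (6 * m) * x ^ (-κ) ≤ x ^ (-ε) := by
  obtain ⟨M, hM, hMle, hMinv⟩ := exists_nat_le_rpow_and_inv_le hx hε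
  have hpow := pow_le_rpow_mul M.cast_nonneg (by positivity) hMle
  refine ⟨M, hM, ?_, hMinv, ?_⟩
  · calc (M : ℝ) ^ 3 ≤ x ^ (ε * (3 : ℕ)) := hpow 3
      _ ≤ x ^ (1 : ℝ) := by
          gcongr
          push_cast
          linarith
      _ = x := Real.rpow_one x
  · calc (M : ℝ) ^ (6 * m) * x ^ (-κ) ≤ x ^ (ε * (6 * m : ℕ)) * x ^ (-κ) := by
          gcongr
          exact hpow _
      _ = x ^ (ε * (6 * m : ℕ) + -κ) := (Real.rpow_add (by positivity) _ _).symm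
      _ ≤ x ^ (-ε) := by
          gcongr
          push_cast
          linarith

lemma norm_sum_eC_floor_le_of_rpow {ι α : Type*} [Fintype ι] (s : Finset α) {ξ : ι → ℝ}
    (hξ : ∀ i, |ξ i| ≤ 1 / 2) (y : α → ι → ℝ) {x ε κ C : ℝ} (hx : 1 ≤ x) (hs : #s ≤ x)
    (hε : 0 ≤ ε) (hε3 : 3 * ε ≤ 1) (hεκ : (6 * Fintype.card ι + 1) * ε ≤ κ) (hC : 0 ≤ C)
    (h : ∀ η : ι → ℝ, (∀ i, |η i| ≤ 2 * x) → (∃ i, 1 / 2 ≤ |η i|) →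
      ‖∑ n ∈ s, eC (∑ i, η i * y n i)‖ ≤ C * (x * x ^ (-κ))) :
    ‖∑ n ∈ s, eC (∑ i, ξ i * (⌊y n i⌋ : ℝ))‖ ≤ ‖∑ n ∈ s, eC (∑ i, ξ i * y n i)‖ +
      (Fintype.card ι * (82 + 8 * C) + C) * (x * x ^ (-ε)) := by
  obtain ⟨M, hM, hM3, hMinv, hMκ⟩ := exists_interpolation_length hx hε hε3 hεκ
  have hM1 : (1 : ℝ) ≤ M := by exact_mod_cast hM
  have hκ : x ^ (-κ) ≤ x ^ (-ε) :=
    (le_mul_of_one_le_left (by positivity) (one_le_pow₀ hM1)).trans hMκ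
  refine (norm_sum_eC_floor_le s hξ y hM (by positivity) fun η hη =>
    h η fun i => (hη i).trans (by gcongr)).trans ?_
  rw [add_assoc, add_mul]
  gcongr ‖∑ n ∈ s, eC (∑ i, ξ i * y n i)‖ + (?_ + ?_)
  · calc Fintype.card ι * (41 * (#s / M) + 8 * (C * (x * x ^ (-κ))))
        = Fintype.card ι * (41 * (#s * (1 / M)) + 8 * (C * (x * x ^ (-κ)))) := by
          rw [mul_one_div]
      _ ≤ Fintype.card ι * (41 * (x * (2 * x ^ (-ε))) + 8 * (C * (x * x ^ (-ε)))) := by gcongr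
      _ = Fintype.card ι * (82 + 8 * C) * (x * x ^ (-ε)) := by ring
  · calc (M : ℝ) ^ (6 * Fintype.card ι) * (C * (x * x ^ (-κ)))
        = C * (x * ((M : ℝ) ^ (6 * Fintype.card ι) * x ^ (-κ))) := by ring
      _ ≤ C * (x * x ^ (-ε)) := by gcongr

lemma exists_interpolation_exponent {κ κ' : ℝ} (hκ : 0 < κ) (hκ' : 0 < κ') (m : ℕ) :
    ∃ ε : ℝ, 0 < ε ∧ 3 * ε ≤ 1 ∧ ε ≤ κ' ∧ (6 * m + 1) * ε ≤ κ := by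
  have hm : (0 : ℝ) < 6 * m + 1 := by positivity
  refine ⟨min (1 / 3) (min κ' (κ / (6 * m + 1))), by positivity, ?_, ?_, ?_⟩
  · linarith [min_le_left (1 / 3) (min κ' (κ / (6 * m + 1)))]
  · exact (min_le_right _ _).trans (min_le_left _ _)
  · rw [← le_div_iff₀' hm]
    exact (min_le_right _ _).trans (min_le_right _ _)

lemma exists_norm_sum_eC_floor_le {m : ℕ} {c : Fin m → ℝ} (hc : Function.Injective c)
    (hpos : ∀ i, 0 < c i) (hint : ∀ i, ∀ k : ℤ, c i ≠ k) :
    ∃ C : ℝ, 0 < C ∧ ∃ κ : ℝ, 0 < κ ∧ ∀ {N : ℕ} {ξ : Fin m → ℝ} {a b : ℕ}, 0 < N →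
      (∀ i, |ξ i| ≤ 1 / 2) → 0 < phaseSize c ξ N → N ≤ 2 * a → b ≤ N + 1 →
      ‖∑ n ∈ Ico a b, eC (∑ i, ξ i * (⌊(n : ℝ) ^ c i⌋ : ℝ))‖ ≤
        C * (N * ((N : ℝ) ^ (-κ) + phaseSize c ξ N ^ (-κ))) := by
  obtain ⟨C₁, hC₁, κ₁, hκ₁, hsmooth⟩ := exists_norm_sum_eC_phase_le hc hint
  obtain ⟨C₂, hC₂, κ₂, hκ₂, hlarge⟩ := exists_norm_sum_eC_phase_le_of_half_le hc hpos hint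
  obtain ⟨ε, hε, hε3, hεκ₁, hεκ₂⟩ := exists_interpolation_exponent hκ₂ hκ₁ m
  simp only [phase_zero] at hsmooth hlarge
  set A : ℝ := m * (82 + 8 * C₂) + C₂ with hA
  have hA0 : 0 < A := by positivity
  refine ⟨C₁ + A + 1, by positivity, ε, hε, ?_⟩
  intro N ξ a b hN hξ hΦ hNa hbN
  have hN1 : (1 : ℝ) ≤ N := by exact_mod_cast hN
  have hab : b ≤ a + N := by lia
  have hcard : (#(Ico a b) : ℝ) ≤ N := by
    rw [Nat.card_Ico]
    exact_mod_cast Nat.sub_le_iff_le_add'.2 hab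
  set P := (N : ℝ) ^ (-ε) + phaseSize c ξ N ^ (-ε) with hP
  have hP_left : (N : ℝ) ^ (-ε) ≤ P := le_add_of_nonneg_right (by positivity)
  have hP_right : phaseSize c ξ N ^ (-ε) ≤ P := le_add_of_nonneg_left (by positivity)
  rcases le_or_gt (phaseSize c ξ N) 1 with hΦ1 | hΦ1
  · calc _ ≤ N * phaseSize c ξ N ^ (-ε) := norm_sum_Ico_eC_le_mul_rpow_neg _ hε.le hΦ hΦ1 hab
      _ ≤ N * P := by gcongr
      _ ≤ (C₁ + A + 1) * (N * P) := le_mul_of_one_le_left (by positivity) (by linarith)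
  · have hfloor := norm_sum_eC_floor_le_of_rpow (Ico a b) hξ (fun n i => (n : ℝ) ^ c i) hN1 hcard
      hε.le hε3 (by rwa [Fintype.card_fin]) hC₂.le
      fun η hη ⟨i, hi⟩ => hlarge i hN hη hi hNa hbN
    have hphase := hsmooth hN (fun i => by linarith [hξ i]) hΦ hNa hbN
    have hκ₁P : (N : ℝ) ^ (-κ₁) + phaseSize c ξ N ^ (-κ₁) ≤ P := by
      rw [hP]
      gcongr
      exact hΦ1.le
    rw [Fintype.card_fin, ← hA] at hfloor
    calc _ ≤ C₁ * (N * P) + A * (N * P) :=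
          hfloor.trans (add_le_add (hphase.trans (by gcongr)) (by gcongr))
      _ = (C₁ + A) * (N * P) := by ring
      _ ≤ (C₁ + A + 1) * (N * P) :=
          mul_le_mul_of_nonneg_right (by linarith) (by positivity)

/-! ### The symbol -/

lemma mZ_eq_sum_Ico (m : ℕ) (c : Fin m → ℝ) (N : ℕ) (ξ : Fin m → ℝ) :
    mZ m c N ξ = (N : ℂ)⁻¹ * ∑ n ∈ Ico (N / 2 + 1) (N + 1),
      eC (∑ i, (ξ i - round (ξ i)) * (⌊(n : ℝ) ^ c i⌋ : ℝ)) := by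
  have hwindow : {n ∈ Icc 1 N | N < 2 * n} = Ico (N / 2 + 1) (N + 1) := by
    ext n
    simp only [mem_filter, mem_Icc, mem_Ico]
    lia
  rw [mZ, ← sum_filter, hwindow]
  congr 1
  refine sum_congr rfl fun n _ => ?_
  rw [eC_sum, eC_sum]
  refine prod_congr rfl fun i _ => ?_
  have hperiod := eC_intCast (round (ξ i) * ⌊(n : ℝ) ^ c i⌋)
  push_cast at hperiod
  rw [sub_mul, eC_sub, hperiod, map_one, mul_one]

lemma exists_norm_mZ_le {m : ℕ} {c : Fin m → ℝ} (hc : Function.Injective c)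
    (hpos : ∀ i, 0 < c i) (hint : ∀ i, ∀ k : ℤ, c i ≠ k) :
    ∃ C : ℝ, 0 < C ∧ ∃ κ : ℝ, 0 < κ ∧ ∀ {N : ℕ} {ξ : Fin m → ℝ} {i : Fin m}, 0 < N →
      0 < distT (ξ i) →
      ‖mZ m c N ξ‖ ≤ C * ((N : ℝ) ^ (-κ) + (distT (ξ i) * (N : ℝ) ^ c i) ^ (-κ)) := by
  obtain ⟨C, hC, κ, hκ, hfloor⟩ := exists_norm_sum_eC_floor_le hc hpos hint
  refine ⟨C, hC, κ, hκ, ?_⟩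
  intro N ξ i hN hi
  have hN' : (0 : ℝ) < N := by exact_mod_cast hN
  have hsize : distT (ξ i) * (N : ℝ) ^ c i ≤ phaseSize c (fun j => ξ j - round (ξ j)) N :=
    mul_rpow_le_phaseSize c (fun j => ξ j - round (ξ j)) i hN'.le
  have hsize_pos : 0 < distT (ξ i) * (N : ℝ) ^ c i := by positivity
  rw [mZ_eq_sum_Ico, norm_mul, norm_inv, Complex.norm_natCast, inv_mul_le_iff₀ hN',
    mul_left_comm]
  refine (hfloor hN (fun j => abs_sub_round (ξ j)) (hsize_pos.trans_le hsize) (by lia)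
    le_rfl).trans ?_
  gcongr C * (N * (_ + ?_))
  exact Real.rpow_le_rpow_of_nonpos hsize_pos hsize (neg_nonpos.2 hκ.le)

lemma ofReal_mul_rpow_add_mul_rpow_rpow {C x d c κ : ℝ} (hC : 0 ≤ C) (hx : 0 < x) (hd : 0 < d) :
    ENNReal.ofReal (C * (x ^ κ + (d * x ^ c) ^ κ)) = ENNReal.ofReal C *
      (ENNReal.ofReal x ^ κ + (ENNReal.ofReal d * ENNReal.ofReal x ^ c) ^ κ) := by
  rw [ENNReal.ofReal_rpow_of_pos hx, ENNReal.ofReal_rpow_of_pos hx, ← ENNReal.ofReal_mul hd.le,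
    ENNReal.ofReal_rpow_of_pos (by positivity), ← ENNReal.ofReal_add (by positivity)
    (by positivity), ← ENNReal.ofReal_mul hC]

/-- direct form of the exponential sum bound, (1.9) of the
paper: for non-integer `0 < c₁ < ⋯ < c_m` there are `C, κ > 0` such that for
all `N ≥ 1` and `ξ₁,…,ξ_m ∈ ℝ`,
`|m_{N;ℤ}(ξ)| ≤ C (N^{−κ} + min_i (‖ξ_i‖_𝕋 N^{c_i})^{−κ})`
(with the `ℝ≥0∞`-convention `0^{−κ} = ∞` for the minimum). -/
theorem stmt10 {m : ℕ} (hm : 0 < m) (c : Fin m → ℝ)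
    (hpos : ∀ i, 0 < c i) (hmono : StrictMono c)
    (hint : ∀ i, ∀ k : ℤ, c i ≠ (k : ℝ)) :
    ∃ C : ℝ, 0 < C ∧ ∃ κ : ℝ, 0 < κ ∧ ∀ N : ℕ, 1 ≤ N → ∀ ξ : Fin m → ℝ,
      (‖mZ m c N ξ‖₊ : ℝ≥0∞) ≤ ENNReal.ofReal C *
        ((N : ℝ≥0∞) ^ (-κ) +
          ⨅ i, (ENNReal.ofReal (distT (ξ i)) * (N : ℝ≥0∞) ^ (c i)) ^ (-κ)) := by
  obtain ⟨C, hC, κ, hκ, hmZ⟩ := exists_norm_mZ_le hmono.injective hpos hint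
  refine ⟨C, hC, κ, hκ, fun N hN ξ => ?_⟩
  have : Nonempty (Fin m) := ⟨⟨0, hm⟩⟩
  obtain ⟨i, hi⟩ := exists_eq_ciInf_of_finite
    (f := fun i => (ENNReal.ofReal (distT (ξ i)) * (N : ℝ≥0∞) ^ (c i)) ^ (-κ))
  rw [← hi]
  rcases (distT_nonneg (ξ i)).eq_or_lt with hξ | hξ
  · have htop : (ENNReal.ofReal (distT (ξ i)) * (N : ℝ≥0∞) ^ (c i)) ^ (-κ) = ∞ := by
      rw [← hξ, ENNReal.ofReal_zero, zero_mul, ENNReal.zero_rpow_of_neg (neg_neg_of_pos hκ)]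
    rw [htop, add_top, ENNReal.mul_top (ENNReal.ofReal_pos.2 hC).ne']
    exact le_top
  · have hN' : (0 : ℝ) < N := by exact_mod_cast hN
    rw [← ENNReal.ofReal_natCast, ← ofReal_mul_rpow_add_mul_rpow_rpow hC.le hN' hξ,
      ← enorm_eq_nnnorm, ← ofReal_norm]
    exact ENNReal.ofReal_le_ofReal (hmZ hN hξ)

end
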